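/- There exist constants b > 0 and γ₀ > 0, depending only on the dimension d, such that for every 0 < γ ≤ γ₀, every finite rectangle Λ ⊂ ℤ^d, and every δ with 0 < δ ≤ γ^{1/4}/4, the minimum level spacing of H(u) satisfies P( min_{α ≠ β} |E_α − E_β| < δ ) ≤ |Λ|·exp(−b·|log γ|^{3/4}·|log δ|^{1/4}), where E_1, …, E_{2|Λ|} are the eigenvalues of H(u) counted with multiplicity and the minimum is over pairs of distinct indices. -/

import Mathlib

open Matrix MeasureTheory

/-- The uniform probability measure on `[-1,1]`. -/
noncomputable def unif : Measure ℝ :=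
  ((2 : NNReal))⁻¹ • (volume.restrict (Set.Icc (-1 : ℝ) 1))

instance : IsProbabilityMeasure unif := by
  constructor
  rw [unif, Measure.smul_apply, Measure.restrict_apply_univ, Real.volume_Icc]
  norm_num
  rw [ENNReal.smul_def]
  simp [ENNReal.inv_mul_cancel]

/-- The product of uniform measures on `[-1,1]^ι` (i.i.d. uniform random variables). -/
noncomputable def unifPi (ι : Type*) [Fintype ι] : Measure (ι → ℝ) :=
  Measure.pi fun _ => unif

/-- The ℓ¹ distance `|x-y| = Σᵢ |xᵢ-yᵢ|` on `ℤ^d`, as a natural number. -/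
def dist1 {d : ℕ} (x y : Fin d → ℤ) : ℕ := ∑ i, (x i - y i).natAbs

/-- The random block Hamiltonian: diagonal 2×2 block `[[u_x,1],[1,-u_x]]` at each
position `x ∈ Λ`, and block `γ·I₂` between nearest-neighbor positions. -/
noncomputable def Ham (d : ℕ) (γ : ℝ) (Λ : Finset (Fin d → ℤ)) (u : {x // x ∈ Λ} → ℝ) :
    Matrix ({x // x ∈ Λ} × Fin 2) ({x // x ∈ Λ} × Fin 2) ℝ := fun s t =>
  if s.1 = t.1 then
    (if s.2 = t.2 then (if s.2 = 0 then u s.1 else -u s.1) else 1)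
  else if dist1 (s.1 : Fin d → ℤ) (t.1 : Fin d → ℤ) = 1 then
    (if s.2 = t.2 then γ else 0)
  else 0

namespace MLS

variable {ι : Type*} [Fintype ι] [DecidableEq ι]

/-- The Hamiltonian in the rotated basis in which `σ_x` is diagonal. -/
def Hab (K : Matrix ι ι ℝ) (u : ι → ℝ) : Matrix (ι × Bool) (ι × Bool) ℝ := fun s t =>
  (if s.2 = t.2 then K s.1 t.1 else 0) +
  (if s.1 = t.1 then (if s.2 = t.2 then (if s.2 then -1 else 1) else u s.1) else 0)

/-- The derivative of the Hamiltonian with respect to `u_x`. -/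
def sg (x : ι) : Matrix (ι × Bool) (ι × Bool) ℝ := fun s t =>
  if s.1 = x ∧ t.1 = x ∧ s.2 ≠ t.2 then 1 else 0

lemma Hab_symm (K : Matrix ι ι ℝ) (hK : K.IsSymm) (u : ι → ℝ) : (Hab K u).IsSymm := by
  ext ⟨x, a⟩ ⟨y, b⟩
  have := hK.apply x y
  simp only [Hab, Matrix.transpose_apply]
  by_cases h : x = y <;> by_cases h' : a = b <;> simp [h, h', this, eq_comm]

lemma Hab_update (K : Matrix ι ι ℝ) (u : ι → ℝ) (x : ι) (τ : ℝ) :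
    Hab K (Function.update u x τ) = Hab K u + (τ - u x) • sg x := by
  ext ⟨y, a⟩ ⟨z, b⟩
  simp only [Hab, sg, Matrix.add_apply, Matrix.smul_apply, smul_eq_mul, Function.update_apply]
  by_cases h : y = z
  · subst h
    by_cases h' : a = b
    · simp [h']
    · by_cases h2 : y = x
      · subst h2; simp [h']
      · simp [h', h2]
  · grind

/-- Contradiction lemma for the Green function. -/
lemma green_contra (K : Matrix ι ι ℝ) (hK : K.IsSymm) (u : ι → ℝ) (E w Y : ℝ) (hw : 0 < w)
    (hw1 : w ≤ 1)
    (hY : 1 ≤ Y) (v : ι × Bool → ℝ) (hv : v ≠ 0)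
    (hXv : ∑ i, (((Hab K u) *ᵥ v) i - E * v i) ^ 2 ≤ w ^ 2 * ∑ i, (v i) ^ 2)
    (M G : Matrix (ι × Bool) (ι × Bool) ℂ)
    (hM : M = (Hab K u).map Complex.ofReal - ((E : ℂ) + Complex.I * w) • (1 : Matrix _ _ ℂ))
    (hMG : M * G = 1)
    (h1 : ∀ x, ‖G (x, false) (x, true)‖ ≤ Y)
    (h2 : ∀ x, ‖G (x, false) (x, true) ^ 2 - G (x, false) (x, false) * G (x, true) (x, true)‖ ≤ Y)
    (h3 : ∀ x y, x ≠ y → ‖2 * G (x, false) (x, true) * G (y, false) (y, true)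
      - (G (x, false) (y, false) * G (x, true) (y, true)
        + G (x, false) (y, true) * G (x, true) (y, false))‖ ≤ Y) :
    1 ≤ 200 * (Fintype.card ι : ℝ) ^ 3 * Y ^ 2 * Real.sqrt w := by
  classical
  have hGM : G * M = 1 := mul_eq_one_comm.mp hMG
  set V : ℝ := (Fintype.card ι : ℝ) with hV
  -- symmetry of M
  have hMs : Mᵀ = M := by
    rw [hM]; ext i j
    have := (Hab_symm K hK u).apply i j
    simp [Matrix.one_apply, this, eq_comm]
  have hMH : Mᴴ - M = (2 * Complex.I * w) • (1 : Matrix (ι × Bool) (ι × Bool) ℂ) := by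
    rw [hM]; ext i j
    have := (Hab_symm K hK u).apply i j
    by_cases h : i = j
    · subst h; simp; ring
    · have h' : j ≠ i := fun h2 => h h2.symm
      simp [Matrix.one_apply, this, h, h']
  have hGs : Gᵀ = G := by
    have : Gᵀ * M = 1 := by
      rw [← hMs, ← Matrix.transpose_mul, hMG, Matrix.transpose_one]
    calc Gᵀ = Gᵀ * (M * G) := by rw [hMG, Matrix.mul_one]
      _ = G := by rw [← Matrix.mul_assoc, this, Matrix.one_mul]
  have hGsym : ∀ i j, G i j = G j i := fun i j => by
    conv_lhs => rw [← hGs]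
    rfl
  -- Ward identity
  have hward : G - Gᴴ = (2 * Complex.I * w) • (G * Gᴴ) := by
    have e1 : Mᴴ * Gᴴ = 1 := by rw [← Matrix.conjTranspose_mul, hGM, Matrix.conjTranspose_one]
    calc G - Gᴴ = G * (Mᴴ * Gᴴ) - (G * M) * Gᴴ := by rw [e1, hGM]; simp
      _ = G * (Mᴴ - M) * Gᴴ := by rw [Matrix.mul_sub, Matrix.sub_mul]; simp [Matrix.mul_assoc]
      _ = _ := by rw [hMH]; simp
  have hIm : ∀ i, (G i i).im = w * ∑ j, ‖G i j‖ ^ 2 := by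
    intro i
    have := congrFun (congrFun hward i) i
    simp only [Matrix.sub_apply, Matrix.conjTranspose_apply, Matrix.smul_apply, Matrix.mul_apply,
      smul_eq_mul] at this
    have e : ∑ j, G i j * star (G i j) = ((∑ j, ‖G i j‖ ^ 2 : ℝ) : ℂ) := by
      push_cast
      refine Finset.sum_congr rfl fun j _ => ?_
      exact Complex.mul_conj' _
    rw [e] at this
    generalize (∑ j, ‖G i j‖ ^ 2 : ℝ) = s at this ⊢
    have := congrArg Complex.im this
    simp at this
    linarith
  have hrow : ∀ i j, ‖G i j‖ ^ 2 ≤ ‖G i i‖ / w := by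
    intro i j
    rw [le_div_iff₀ hw]
    have a1 : ‖G i j‖ ^ 2 ≤ ∑ j, ‖G i j‖ ^ 2 :=
      Finset.single_le_sum (f := fun j => ‖G i j‖ ^ 2) (fun _ _ => by positivity) (Finset.mem_univ j)
    have a2 : (G i i).im ≤ ‖G i i‖ := (le_abs_self _).trans (Complex.abs_im_le_norm _)
    rw [hIm] at a2
    nlinarith
  -- Hilbert–Schmidt lower bound
  have hvpos : 0 < ∑ i, (v i) ^ 2 := by
    obtain ⟨i, hi⟩ := Function.ne_iff.mp hv
    have : 0 < v i ^ 2 := by have : v i ≠ 0 := hi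
                             positivity
    exact lt_of_lt_of_le this (Finset.single_le_sum (f := fun i => v i ^ 2) (fun _ _ => by positivity) (Finset.mem_univ i))
  let vc : ι × Bool → ℂ := fun i => (v i : ℂ)
  have hMv : ∀ i, ‖(M *ᵥ vc) i‖ ^ 2 = (((Hab K u) *ᵥ v) i - E * v i) ^ 2 + w ^ 2 * v i ^ 2 := by
    intro i
    have : (M *ᵥ vc) i = ((((Hab K u) *ᵥ v) i - E * v i : ℝ) : ℂ) + ((-(w * v i) : ℝ) : ℂ) * Complex.I := by
      rw [hM, Matrix.sub_mulVec, Matrix.smul_mulVec, Matrix.one_mulVec]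
      simp only [Pi.sub_apply, Pi.smul_apply, smul_eq_mul, Matrix.mulVec, dotProduct, Matrix.map_apply, vc]
      push_cast
      ring
    rw [this, ← Complex.normSq_eq_norm_sq, Complex.normSq_add_mul_I]
    ring
  have hMvs : ∑ i, ‖(M *ᵥ vc) i‖ ^ 2 ≤ 2 * w ^ 2 * ∑ i, (v i) ^ 2 := by
    simp_rw [hMv]
    rw [Finset.sum_add_distrib, ← Finset.mul_sum]
    linarith
  have hHS : 1 ≤ (∑ i, ∑ j, ‖G i j‖ ^ 2) * (2 * w ^ 2) := by
    have b1 : ∀ i, (v i) ^ 2 ≤ (∑ j, ‖G i j‖ ^ 2) * ∑ j, ‖(M *ᵥ vc) j‖ ^ 2 := by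
      intro i
      have c1 : vc i = ∑ j, G i j * (M *ᵥ vc) j := by
        have : G *ᵥ (M *ᵥ vc) = vc := by rw [Matrix.mulVec_mulVec, hGM, Matrix.one_mulVec]
        conv_lhs => rw [← this]
        rfl
      have c2 : |v i| ≤ ∑ j, ‖G i j‖ * ‖(M *ᵥ vc) j‖ := by
        have : |v i| = ‖vc i‖ := by simp [vc]
        rw [this, c1]
        refine (norm_sum_le _ _).trans (le_of_eq ?_)
        simp
      calc (v i) ^ 2 = |v i| ^ 2 := (sq_abs _).symm
        _ ≤ (∑ j, ‖G i j‖ * ‖(M *ᵥ vc) j‖) ^ 2 := by gcongr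
        _ ≤ _ := Finset.sum_mul_sq_le_sq_mul_sq _ _ _
    have b2 : ∑ i, (v i) ^ 2 ≤ (∑ i, ∑ j, ‖G i j‖ ^ 2) * ∑ j, ‖(M *ᵥ vc) j‖ ^ 2 := by
      rw [Finset.sum_mul]
      exact Finset.sum_le_sum fun i _ => b1 i
    have b3 : ∑ i, (v i) ^ 2 ≤ (∑ i, ∑ j, ‖G i j‖ ^ 2) * (2 * w ^ 2 * ∑ i, (v i) ^ 2) :=
      b2.trans (by gcongr)
    nlinarith
  -- a large diagonal entry
  have hbig : ∃ i, 1 ≤ 4 * V * w * ‖G i i‖ := by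
    by_contra hcon
    push Not at hcon
    have d1 : ∀ i, ∑ j, ‖G i j‖ ^ 2 ≤ ‖G i i‖ / w := by
      intro i
      rw [le_div_iff₀ hw]
      have a2 : (G i i).im ≤ ‖G i i‖ := (le_abs_self _).trans (Complex.abs_im_le_norm _)
      rw [hIm] at a2
      linarith
    have d2 : (∑ i, ∑ j, ‖G i j‖ ^ 2) ≤ ∑ i, ‖G i i‖ / w := Finset.sum_le_sum fun i _ => d1 i
    obtain ⟨i0, _⟩ := Function.ne_iff.mp hv
    have hVpos : 0 < V := by
      have : 0 < Fintype.card ι := Fintype.card_pos_iff.mpr ⟨i0.1⟩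
      rw [hV]; exact_mod_cast this
    have d3 : ∑ i, ‖G i i‖ / w < ∑ i : ι × Bool, 1 / (4 * V * w ^ 2) := by
      apply Finset.sum_lt_sum_of_nonempty ⟨i0, Finset.mem_univ _⟩
      intro i _
      rw [div_lt_div_iff₀ hw (by positivity)]
      have := hcon i
      nlinarith
    have d4 : ∑ i : ι × Bool, 1 / (4 * V * w ^ 2) = 1 / (2 * w ^ 2) := by
      simp only [Finset.sum_const, Finset.card_univ, Fintype.card_prod, Fintype.card_bool, nsmul_eq_mul]
      push_cast
      rw [← hV]
      field_simp
      norm_num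
    rw [d4] at d3
    have d5 : (∑ i, ∑ j, ‖G i j‖ ^ 2) < 1 / (2 * w ^ 2) := lt_of_le_of_lt d2 d3
    rw [lt_div_iff₀ (by positivity)] at d5
    linarith
  obtain ⟨⟨x, α⟩, hx⟩ := hbig
  have hV1 : 1 ≤ V := by
    have : 0 < Fintype.card ι := Fintype.card_pos_iff.mpr ⟨x⟩
    rw [hV]; exact_mod_cast this
  -- symmetric consequences
  have g1 : ∀ y, ‖G (y, false) (y, false) * G (y, true) (y, true)‖ ≤ 2 * Y ^ 2 := by
    intro y
    have e : G (y, false) (y, false) * G (y, true) (y, true) =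
      G (y, false) (y, true) ^ 2 - (G (y, false) (y, true) ^ 2 - G (y, false) (y, false) * G (y, true) (y, true)) := by ring
    rw [e]
    refine (norm_sub_le _ _).trans ?_
    have := h2 y
    have := h1 y
    have : ‖G (y, false) (y, true) ^ 2‖ ≤ Y ^ 2 := by rw [norm_pow]; gcongr
    nlinarith
  have g2 : ∀ y, ∀ β, ‖G (y, β) (y, β)‖ * ‖G (y, !β) (y, !β)‖ ≤ 2 * Y ^ 2 := by
    intro y β
    have := g1 y
    rw [norm_mul] at this
    cases β
    · simpa using this
    · simpa [mul_comm] using this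
  have g3 : ∀ y, ‖G (x, α) (y, α) * G (x, !α) (y, !α) + G (x, α) (y, !α) * G (x, !α) (y, α)‖ ≤ 3 * Y ^ 2 := by
    intro y
    have key : ‖G (x, false) (y, false) * G (x, true) (y, true) + G (x, false) (y, true) * G (x, true) (y, false)‖ ≤ 3 * Y ^ 2 := by
      by_cases hxy : x = y
      · subst hxy
        rw [hGsym (x, true) (x, false)]
        refine (norm_add_le _ _).trans ?_
        have := g1 x
        have h := h1 x
        have : ‖G (x, false) (x, true) * G (x, false) (x, true)‖ ≤ Y * Y := by
          rw [norm_mul]; gcongr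
        nlinarith
      · have e : G (x, false) (y, false) * G (x, true) (y, true) + G (x, false) (y, true) * G (x, true) (y, false)
          = 2 * G (x, false) (x, true) * G (y, false) (y, true) -
           (2 * G (x, false) (x, true) * G (y, false) (y, true)
      - (G (x, false) (y, false) * G (x, true) (y, true)
        + G (x, false) (y, true) * G (x, true) (y, false))) := by ring
        rw [e]
        refine (norm_sub_le _ _).trans ?_
        have a1 := h3 x y hxy
        have : ‖2 * G (x, false) (x, true) * G (y, false) (y, true)‖ ≤ 2 * Y * Y := by
          rw [norm_mul, norm_mul]
          have := h1 x
          have := h1 y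
          simp only [Complex.norm_ofNat]
          gcongr
        nlinarith
    cases α
    · simpa using key
    · have e : G (x, true) (y, true) * G (x, false) (y, false) + G (x, true) (y, false) * G (x, false) (y, true)
        = G (x, false) (y, false) * G (x, true) (y, true) + G (x, false) (y, true) * G (x, true) (y, false) := by ring
      simp only [Bool.not_true]
      rw [e]; exact key
  -- the partner diagonal entry is small
  have k0 : 0 < ‖G (x, α) (x, α)‖ := by
    by_contra h
    have : ‖G (x, α) (x, α)‖ = 0 := le_antisymm (not_lt.mp h) (norm_nonneg _)
    rw [this] at hx
    norm_num at hx
  have k1 : ‖G (x, !α) (x, !α)‖ ≤ 8 * V * Y ^ 2 * w := by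
    have a := g2 x α
    have b : ‖G (x, !α) (x, !α)‖ ≤ ‖G (x, !α) (x, !α)‖ * (4 * V * w * ‖G (x, α) (x, α)‖) :=
      le_mul_of_one_le_right (norm_nonneg _) hx
    have : ‖G (x, !α) (x, !α)‖ * (4 * V * w * ‖G (x, α) (x, α)‖) ≤ 4 * V * w * (2 * Y ^ 2) := by
      calc _ = 4 * V * w * (‖G (x, α) (x, α)‖ * ‖G (x, !α) (x, !α)‖) := by ring
        _ ≤ _ := by gcongr
    linarith
  have k2 : ∀ j, ‖G (x, !α) j‖ ≤ 3 * V * Y := by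
    intro j
    have a := hrow (x, !α) j
    have b : ‖G (x, !α) (x, !α)‖ / w ≤ 8 * V * Y ^ 2 := by
      rw [div_le_iff₀ hw]; linarith
    have c : ‖G (x, !α) j‖ ^ 2 ≤ (3 * V * Y) ^ 2 := by
      have : V ≤ V ^ 2 := by nlinarith
      calc _ ≤ 8 * V * Y ^ 2 := a.trans b
        _ ≤ 9 * V ^ 2 * Y ^ 2 := by
          have : 8 * V ≤ 9 * V ^ 2 := by nlinarith
          exact mul_le_mul_of_nonneg_right this (by positivity)
        _ = _ := by ring
    exact le_of_sq_le_sq c (by positivity)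
  set sw := Real.sqrt w with hsw
  have hsw0 : 0 < sw := Real.sqrt_pos.mpr hw
  have hsw2 : sw ^ 2 = w := Real.sq_sqrt hw.le
  have hsw1 : sw ≤ 1 := Real.sqrt_le_one.mpr hw1
  have k3 : ∀ y β, ‖G (y, β) (y, β)‖ ≤ 2 * Y → ‖G (x, α) (y, β)‖ ≤ 2 * Y / sw := by
    intro y β h
    rw [hGsym]
    have a := hrow (y, β) (x, α)
    have : ‖G (y, β) (x, α)‖ ^ 2 ≤ (2 * Y / sw) ^ 2 := by
      rw [div_pow, hsw2]
      refine a.trans ?_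
      gcongr
      nlinarith
    exact le_of_sq_le_sq this (by positivity)
  have k4 : ∀ y, ‖G (x, α) (y, α) * G (x, !α) (y, !α) - G (x, α) (y, !α) * G (x, !α) (y, α)‖
      ≤ 15 * V * Y ^ 2 / sw := by
    intro y
    have hY2 : 3 * Y ^ 2 ≤ 3 * V * Y ^ 2 / sw := by
      rw [le_div_iff₀ hsw0]
      have : Y ^ 2 * sw ≤ Y ^ 2 * V := by gcongr; linarith
      nlinarith
    have hor : ‖G (y, α) (y, α)‖ ≤ 2 * Y ∨ ‖G (y, !α) (y, !α)‖ ≤ 2 * Y := by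
      by_contra hcon
      push Not at hcon
      have := g2 y α
      have : (2 * Y) * (2 * Y) < ‖G (y, α) (y, α)‖ * ‖G (y, !α) (y, !α)‖ :=
        mul_lt_mul'' hcon.1 hcon.2 (by positivity) (by positivity)
      nlinarith
    have hs := g3 y
    rcases hor with h | h
    · have a := k3 y α h
      have b := k2 (y, !α)
      have c : ‖G (x, α) (y, α) * G (x, !α) (y, !α)‖ ≤ 2 * Y / sw * (3 * V * Y) := by
        rw [norm_mul]; gcongr
      have e : G (x, α) (y, α) * G (x, !α) (y, !α) - G (x, α) (y, !α) * G (x, !α) (y, α) =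
        2 * (G (x, α) (y, α) * G (x, !α) (y, !α)) -
        (G (x, α) (y, α) * G (x, !α) (y, !α) + G (x, α) (y, !α) * G (x, !α) (y, α)) := by ring
      rw [e]
      refine (norm_sub_le _ _).trans ?_
      rw [norm_mul, Complex.norm_ofNat]
      calc _ ≤ 2 * (2 * Y / sw * (3 * V * Y)) + 3 * V * Y ^ 2 / sw := by linarith
        _ = _ := by field_simp; ring
    · have a := k3 y (!α) h
      have b := k2 (y, α)
      have c : ‖G (x, α) (y, !α) * G (x, !α) (y, α)‖ ≤ 2 * Y / sw * (3 * V * Y) := by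
        rw [norm_mul]; gcongr
      have e : G (x, α) (y, α) * G (x, !α) (y, !α) - G (x, α) (y, !α) * G (x, !α) (y, α) =
        (G (x, α) (y, α) * G (x, !α) (y, !α) + G (x, α) (y, !α) * G (x, !α) (y, α)) -
        2 * (G (x, α) (y, !α) * G (x, !α) (y, α)) := by ring
      rw [e]
      refine (norm_sub_le _ _).trans ?_
      rw [norm_mul, Complex.norm_ofNat]
      calc _ ≤ 3 * V * Y ^ 2 / sw + 2 * (2 * Y / sw * (3 * V * Y)) := by linarith
        _ = _ := by field_simp; ring
  -- the flipped resolvent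
  let fl : (ι × Bool) ≃ (ι × Bool) := Equiv.prodCongr (Equiv.refl ι) Equiv.boolNot
  let Gt : Matrix (ι × Bool) (ι × Bool) ℂ := G.submatrix fl fl
  let S : Matrix (ι × Bool) (ι × Bool) ℂ := Matrix.diagonal fun i => if i.2 then -1 else 1
  have f1 : M.submatrix fl fl = M - (2 : ℂ) • S := by
    rw [hM]
    ext ⟨y, a⟩ ⟨z, b⟩
    by_cases hyz : y = z
    · subst hyz
      cases a <;> cases b <;> simp [fl, S, Hab] <;> ring
    · cases a <;> cases b <;> simp [fl, S, Hab, hyz]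
  have f2 : (M - (2 : ℂ) • S) * Gt = 1 := by
    rw [← f1, Matrix.submatrix_mul_equiv, hMG, Matrix.submatrix_one_equiv]
  have f3 : G - Gt = (-2 : ℂ) • (G * S * Gt) := by
    calc G - Gt = G * ((M - (2 : ℂ) • S) * Gt) - (G * M) * Gt := by rw [f2, hGM]; simp
      _ = G * ((M - (2 : ℂ) • S) - M) * Gt := by
        generalize M - (2 : ℂ) • S = A
        rw [Matrix.mul_sub, Matrix.sub_mul]
        simp only [Matrix.mul_assoc]
      _ = _ := by simp
  have f4 : ‖G (x, α) (x, α) - G (x, !α) (x, !α)‖ ≤ 2 * ∑ y : ι, 15 * V * Y ^ 2 / sw := by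
    have a := congrFun (congrFun f3 (x, α)) (x, α)
    have b : (G * S * Gt) (x, α) (x, α) = ∑ y, (if α then -1 else 1) *
      (G (x, α) (y, α) * G (x, !α) (y, !α) - G (x, α) (y, !α) * G (x, !α) (y, α)) := by
      rw [Matrix.mul_apply, Fintype.sum_prod_type]
      refine Finset.sum_congr rfl fun y _ => ?_
      rw [Fintype.sum_bool]
      simp only [S, Matrix.mul_diagonal, Gt, Matrix.submatrix_apply, fl, Equiv.prodCongr_apply, Prod.map,
        Equiv.refl_apply, Equiv.boolNot_apply]
      rw [hGsym (y, !true) (x, !α), hGsym (y, !false) (x, !α)]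
      cases α <;> simp <;> ring
    have c : (G - Gt) (x, α) (x, α) = G (x, α) (x, α) - G (x, !α) (x, !α) := by
      simp [Gt, fl]
    rw [c] at a
    rw [a, Matrix.smul_apply, b, smul_eq_mul, norm_mul]
    have : ‖(-2 : ℂ)‖ = 2 := by simp
    rw [this]
    gcongr
    refine (norm_sum_le _ _).trans (Finset.sum_le_sum fun y _ => ?_)
    rw [norm_mul]
    have : ‖(if α then (-1 : ℂ) else 1)‖ = 1 := by cases α <;> simp
    rw [this, one_mul]
    exact k4 y
  have f5 : ‖G (x, α) (x, α)‖ ≤ 8 * V * Y ^ 2 * w + 2 * (V * (15 * V * Y ^ 2 / sw)) := by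
    have : ∑ y : ι, 15 * V * Y ^ 2 / sw = V * (15 * V * Y ^ 2 / sw) := by
      simp [hV]
    rw [this] at f4
    calc _ = ‖(G (x, α) (x, α) - G (x, !α) (x, !α)) + G (x, !α) (x, !α)‖ := by congr 1; ring
      _ ≤ _ := (norm_add_le _ _).trans (by linarith)
  have e1 : 4 * V * w * ‖G (x, α) (x, α)‖ ≤
      4 * V * w * (8 * V * Y ^ 2 * w + 2 * (V * (15 * V * Y ^ 2 / sw))) := by gcongr
  have e2 : 4 * V * w * (8 * V * Y ^ 2 * w + 2 * (V * (15 * V * Y ^ 2 / sw)))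
      = 32 * V ^ 2 * Y ^ 2 * (sw ^ 3 * sw) + 120 * V ^ 3 * Y ^ 2 * sw := by
    rw [← hsw2]; field_simp; ring
  have e3 : 32 * V ^ 2 * Y ^ 2 * (sw ^ 3 * sw) ≤ 32 * V ^ 3 * Y ^ 2 * (1 * sw) := by
    gcongr
    · norm_num
    · exact pow_le_one₀ hsw0.le hsw1
  have e4 : 0 ≤ V ^ 3 * Y ^ 2 * sw := by positivity
  nlinarith

end MLS

namespace MLS

lemma det_rank_k {n : Type*} [Fintype n] [DecidableEq n] {k : ℕ} (M G : Matrix n n ℂ)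
    (hMG : M * G = 1) (c r : Fin k → n) (t : Fin k → ℂ) :
    (M + ∑ q, t q • Matrix.single (c q) (r q) (1 : ℂ)).det =
      M.det * (1 + Matrix.of fun p q => G (r p) (c q) * t q : Matrix (Fin k) (Fin k) ℂ).det := by
  let B : Matrix n (Fin k) ℂ := Matrix.of fun i q => if i = c q then t q else 0
  let C : Matrix (Fin k) n ℂ := Matrix.of fun p j => if j = r p then 1 else 0
  have e1 : ∑ q, t q • Matrix.single (c q) (r q) (1 : ℂ) = B * C := by
    ext i j
    rw [Matrix.sum_apply, Matrix.mul_apply]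
    refine Finset.sum_congr rfl fun q _ => ?_
    simp only [B, C, Matrix.smul_apply, Matrix.single_apply, Matrix.of_apply, smul_eq_mul]
    by_cases h1 : i = c q <;> by_cases h2 : j = r q <;> simp [h1, h2, eq_comm]
  have e2 : M + B * C = M * (1 + G * B * C) := by
    rw [Matrix.mul_add, Matrix.mul_one, Matrix.mul_assoc G, ← Matrix.mul_assoc M, hMG, Matrix.one_mul]
  have e3 : C * (G * B) = Matrix.of fun p q => G (r p) (c q) * t q := by
    ext p q
    simp [Matrix.mul_apply, B, C]
  rw [e1, e2, Matrix.det_mul, Matrix.det_one_add_mul_comm, e3]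

variable {ι : Type*} [Fintype ι] [DecidableEq ι]

lemma sg_single (x : ι) : (sg x).map Complex.ofReal =
    Matrix.single (x, false) (x, true) (1 : ℂ) + Matrix.single (x, true) (x, false) (1 : ℂ) := by
  ext ⟨y, a⟩ ⟨z, b⟩
  simp only [sg, Matrix.map_apply, Matrix.add_apply, Matrix.single_apply, Prod.mk.injEq]
  by_cases h1 : y = x <;> by_cases h2 : z = x <;> cases a <;> cases b <;> simp [h1, h2, eq_comm]
  all_goals grind

lemma det_one_site (M G : Matrix (ι × Bool) (ι × Bool) ℂ) (hMG : M * G = 1)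
    (hG : ∀ i j, G i j = G j i) (x : ι) (t : ℂ) :
    (M + t • (sg x).map Complex.ofReal).det = M.det * (1 + 2 * G (x, false) (x, true) * t +
      (G (x, false) (x, true) ^ 2 - G (x, false) (x, false) * G (x, true) (x, true)) * t ^ 2) := by
  have := det_rank_k M G hMG ![(x, false), (x, true)] ![(x, true), (x, false)] ![t, t]
  simp only [Fin.sum_univ_two, Matrix.cons_val_zero, Matrix.cons_val_one] at this
  rw [sg_single, smul_add, this, Matrix.det_fin_two]
  congr 1
  simp
  rw [hG (x, true) (x, false)]
  ring

lemma det_four (a00 a01 a02 a03 a10 a11 a12 a13 a20 a21 a22 a23 a30 a31 a32 a33 : ℂ) :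
    (!![a00, a01, a02, a03; a10, a11, a12, a13; a20, a21, a22, a23; a30, a31, a32, a33] : Matrix (Fin 4) (Fin 4) ℂ).det = (a00 * a11 * a22 * a33 - a00 * a11 * a23 * a32 - a00 * a12 * a21 * a33 + a00 * a12 * a23 * a31 + a00 * a13 * a21 * a32 - a00 * a13 * a22 * a31 - a01 * a10 * a22 * a33 + a01 * a10 * a23 * a32 + a01 * a12 * a20 * a33 - a01 * a12 * a23 * a30 - a01 * a13 * a20 * a32 + a01 * a13 * a22 * a30 + a02 * a10 * a21 * a33 - a02 * a10 * a23 * a31 - a02 * a11 * a20 * a33 + a02 * a11 * a23 * a30 + a02 * a13 * a20 * a31 - a02 * a13 * a21 * a30 - a03 * a10 * a21 * a32 + a03 * a10 * a22 * a31 + a03 * a11 * a20 * a32 - a03 * a11 * a22 * a30 - a03 * a12 * a20 * a31 + a03 * a12 * a21 * a30) := by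
  rw [Matrix.det_succ_row_zero]
  simp only [Fin.sum_univ_four, Matrix.det_fin_three]
  simp [Fin.succAbove]
  ring

lemma det_two_site (M G : Matrix (ι × Bool) (ι × Bool) ℂ) (hMG : M * G = 1)
    (hG : ∀ i j, G i j = G j i) (x y : ι) :
    ∃ a0 a1 b0 b2 c0 c1 c2 : ℂ, ∀ t s : ℂ,
    (M + t • (sg x).map Complex.ofReal + s • (sg y).map Complex.ofReal).det = M.det * (
      (1 + a0 * s + a1 * s ^ 2) +
      (b0 + 2 * (2 * G (x, false) (x, true) * G (y, false) (y, true)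
      - (G (x, false) (y, false) * G (x, true) (y, true)
        + G (x, false) (y, true) * G (x, true) (y, false))) * s + b2 * s ^ 2) * t
      + (c0 + c1 * s + c2 * s ^ 2) * t ^ 2) := by
  have := fun t s : ℂ => det_rank_k M G hMG ![(x, false), (x, true), (y, false), (y, true)]
    ![(x, true), (x, false), (y, true), (y, false)] ![t, t, s, s]
  simp only [Fin.sum_univ_four, Matrix.cons_val_zero, Matrix.cons_val_one, Matrix.cons_val] at this
  have h2 : ∀ t s : ℂ, M + t • (sg x).map Complex.ofReal + s • (sg y).map Complex.ofReal =
     M + (t • single (x, false) (x, true) 1 + t • single (x, true) (x, false) 1 + s • single (y, false) (y, true) 1 +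
            s • single (y, true) (y, false) 1) := by
    intro t s
    rw [sg_single, sg_single]
    module
  simp_rw [h2, this]
  have h3 : ∀ t s : ℂ, (1 + of fun p q =>
              G (![(x, true), (x, false), (y, true), (y, false)] p)
                  (![(x, false), (x, true), (y, false), (y, true)] q) *
                ![t, t, s, s] q : Matrix (Fin 4) (Fin 4) ℂ) = 
      !![1 + G (x, false) (x, true) * t, G (x, true) (x, true) * t, G (x, true) (y, false) * s,
          G (x, true) (y, true) * s;
        G (x, false) (x, false) * t, 1 + G (x, false) (x, true) * t, G (x, false) (y, false) * s,
          G (x, false) (y, true) * s;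
        G (x, false) (y, true) * t, G (x, true) (y, true) * t, 1 + G (y, false) (y, true) * s,
          G (y, true) (y, true) * s;
        G (x, false) (y, false) * t, G (x, true) (y, false) * t, G (y, false) (y, false) * s,
          1 + G (y, false) (y, true) * s] := by
    intro t s
    ext i j
    fin_cases i <;> fin_cases j <;> simp [Matrix.one_apply, hG (x, true) (x, false), hG (y, true) (y, false),
      hG (y, true) (x, true), hG (y, true) (x, false), hG (y, false) (x, true), hG (y, false) (x, false)]
  simp_rw [h3, det_four]
  generalize G (x, false) (x, true) = g1
  generalize G (x, false) (x, false) = g2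
  generalize G (x, true) (x, true) = g3
  generalize G (y, false) (y, true) = k1
  generalize G (y, false) (y, false) = k2
  generalize G (y, true) (y, true) = k3
  generalize G (x, false) (y, false) = l1
  generalize G (x, false) (y, true) = l2
  generalize G (x, true) (y, false) = l3
  generalize G (x, true) (y, true) = l4
  refine ⟨2 * k1, k1 ^ 2 - k2 * k3, 2 * g1,
    (g1 * k1 * k1 - g1 * k3 * k2 - l3 * l2 * k1 + l3 * k3 * l1 + l4 * l2 * k2 - l4 * k1 * l1) + (g1 * k1 * k1 - g1 * k3 * k2 - l1 * l4 * k1 + l1 * k3 * l3 + l2 * l4 * k2 - l2 * k1 * l3),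
    g1 ^ 2 - g2 * g3,
    (g1 * g1 * k1 - g1 * l1 * l4 - g3 * g2 * k1 + g3 * l1 * l2 + l3 * g2 * l4 - l3 * g1 * l2) + (g1 * g1 * k1 - g1 * l2 * l3 - g3 * g2 * k1 + g3 * l2 * l1 + l4 * g2 * l3 - l4 * g1 * l1),
    (g1 * g1 * k1 * k1 - g1 * g1 * k3 * k2 - g1 * l1 * l4 * k1 + g1 * l1 * k3 * l3 + g1 * l2 * l4 * k2 - g1 * l2 * k1 * l3 - g3 * g2 * k1 * k1 + g3 * g2 * k3 * k2 + g3 * l1 * l2 * k1 - g3 * l1 * k3 * l1 - g3 * l2 * l2 * k2 + g3 * l2 * k1 * l1 + l3 * g2 * l4 * k1 - l3 * g2 * k3 * l3 - l3 * g1 * l2 * k1 + l3 * g1 * k3 * l1 + l3 * l2 * l2 * l3 - l3 * l2 * l4 * l1 - l4 * g2 * l4 * k2 + l4 * g2 * k1 * l3 + l4 * g1 * l2 * k2 - l4 * g1 * k1 * l1 - l4 * l1 * l2 * l3 + l4 * l1 * l4 * l1), ?_⟩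
  intro t s
  ring

end MLS

namespace MLS

lemma interp (q0 q1 q2 : ℂ) (s B : ℝ) (hs : |s| ≤ 1)
    (h0 : ‖q0 + q1 * (0 - s) + q2 * (0 - s) ^ 2‖ ≤ B)
    (h1 : ‖q0 + q1 * (1 - s) + q2 * (1 - s) ^ 2‖ ≤ B)
    (h2 : ‖q0 + q1 * (-1 - s) + q2 * (-1 - s) ^ 2‖ ≤ B) : ‖q1‖ ≤ 5 * B ∧ ‖q2‖ ≤ 5 * B := by
  set a := q0 + q1 * (0 - s) + q2 * (0 - s) ^ 2
  set b := q0 + q1 * (1 - s) + q2 * (1 - s) ^ 2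
  set c := q0 + q1 * (-1 - s) + q2 * (-1 - s) ^ 2
  have hB : 0 ≤ B := (norm_nonneg _).trans h0
  have e2 : q2 = (b + c) / 2 - a := by simp only [a, b, c]; ring
  have n2 : ‖q2‖ ≤ 2 * B := by
    rw [e2]
    refine (norm_sub_le _ _).trans ?_
    rw [norm_div, Complex.norm_ofNat]
    have := norm_add_le b c
    linarith
  have e1 : q1 = (b - c) / 2 + 2 * q2 * s := by simp only [a, b, c]; ring
  refine ⟨?_, by linarith⟩
  rw [e1]
  refine (norm_add_le _ _).trans ?_
  rw [norm_div, norm_mul, norm_mul, Complex.norm_ofNat, Complex.norm_real, Real.norm_eq_abs]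
  have := norm_sub_le b c
  have : 2 * ‖q2‖ * |s| ≤ 2 * ‖q2‖ * 1 := by gcongr
  linarith

variable {ι : Type*} [Fintype ι] [DecidableEq ι]

/-- The shifted complex matrix. -/
noncomputable def Mz (K : Matrix ι ι ℝ) (E w : ℝ) (u : ι → ℝ) : Matrix (ι × Bool) (ι × Bool) ℂ :=
  (Hab K u).map Complex.ofReal - ((E : ℂ) + Complex.I * w) • (1 : Matrix _ _ ℂ)

/-- The characteristic determinant at complex energy. -/
noncomputable def ff (K : Matrix ι ι ℝ) (E w : ℝ) (u : ι → ℝ) : ℂ := (Mz K E w u).det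

lemma Mz_update (K : Matrix ι ι ℝ) (E w : ℝ) (u : ι → ℝ) (x : ι) (τ : ℝ) :
    Mz K E w (Function.update u x τ) =
      Mz K E w u + ((τ : ℂ) - u x) • (sg x).map Complex.ofReal := by
  ext i j
  simp [Mz, Hab_update]
  ring

lemma ff_ne (K : Matrix ι ι ℝ) (hK : K.IsSymm) (E w : ℝ) (hw : 0 < w) (u : ι → ℝ) :
    ff K E w u ≠ 0 := by
  intro h
  obtain ⟨v, hv, hMv⟩ := Matrix.exists_mulVec_eq_zero_iff.mpr h
  have hH : ((Hab K u).map Complex.ofReal).IsHermitian := by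
    ext i j
    have := (Hab_symm K hK u).apply i j
    simp [this]
  rw [Mz, Matrix.sub_mulVec, Matrix.smul_mulVec, Matrix.one_mulVec, sub_eq_zero] at hMv
  have e := hH.im_star_dotProduct_mulVec_self v
  rw [hMv, dotProduct_smul] at e
  have e2 : star v ⬝ᵥ v = ((∑ i, ‖v i‖ ^ 2 : ℝ) : ℂ) := by
    push_cast
    simp only [dotProduct]
    refine Finset.sum_congr rfl fun j _ => ?_
    exact Complex.conj_mul' _
  rw [e2] at e
  have hpos : 0 < ∑ i, ‖v i‖ ^ 2 := by
    obtain ⟨i, hi⟩ := Function.ne_iff.mp hv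
    have : 0 < ‖v i‖ ^ 2 := by have := norm_pos_iff.mpr hi; positivity
    exact lt_of_lt_of_le this (Finset.single_le_sum (f := fun i => ‖v i‖ ^ 2) (fun _ _ => by positivity) (Finset.mem_univ i))
  generalize (∑ i, ‖v i‖ ^ 2 : ℝ) = S at *
  simp at e
  rcases e with e | e <;> linarith

/-- Atypical values of the coordinate `x`. -/
def Atyp (K : Matrix ι ι ℝ) (E w κ : ℝ) (x : ι) : Set (ι → ℝ) :=
  {u | ∃ ν : ℝ, (ν = 0 ∨ ν = 1 ∨ ν = -1) ∧ ‖ff K E w u‖ < κ * ‖ff K E w (Function.update u x ν)‖}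

lemma typ_contra (K : Matrix ι ι ℝ) (hK : K.IsSymm) (u : ι → ℝ) (hu : ∀ x, |u x| ≤ 1) (E w κ : ℝ)
    (hw : 0 < w) (hw1 : w ≤ 1) (hκ : 0 < κ) (hκ1 : κ ≤ 1) (v : ι × Bool → ℝ) (hv : v ≠ 0)
    (hXv : ∑ i, (((Hab K u) *ᵥ v) i - E * v i) ^ 2 ≤ w ^ 2 * ∑ i, (v i) ^ 2)
    (ht1 : ∀ x, u ∉ Atyp K E w κ x)
    (ht2 : ∀ x y, x ≠ y → ∀ ν : ℝ, (ν = 0 ∨ ν = 1 ∨ ν = -1) →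
      Function.update u y ν ∉ Atyp K E w κ x) :
    1 ≤ 200 * (Fintype.card ι : ℝ) ^ 3 * (25 * (κ⁻¹) ^ 2) ^ 2 * Real.sqrt w := by
  have hf0 := ff_ne K hK E w hw u
  have hf1 : 0 < ‖ff K E w u‖ := norm_pos_iff.mpr hf0
  set M := Mz K E w u with hM
  have hU : IsUnit M.det := isUnit_iff_ne_zero.mpr hf0
  have hMG : M * M⁻¹ = 1 := Matrix.mul_nonsing_inv _ hU
  set G := M⁻¹ with hG
  have hMs : Mᵀ = M := by
    rw [hM, Mz]; ext i j
    have := (Hab_symm K hK u).apply i j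
    simp [Matrix.one_apply, this, eq_comm]
  have hGsym : ∀ i j, G i j = G j i := fun i j => by
    have : Gᵀ = G := by rw [hG, Matrix.transpose_nonsing_inv, hMs]
    conv_lhs => rw [← this]
    rfl
  have hκi : 1 ≤ κ⁻¹ := (one_le_inv₀ hκ).mpr hκ1
  have one : ∀ x, ∀ ν : ℝ, (ν = 0 ∨ ν = 1 ∨ ν = -1) →
      ‖1 + 2 * G (x, false) (x, true) * ((ν : ℂ) - u x) +
      (G (x, false) (x, true) ^ 2 - G (x, false) (x, false) * G (x, true) (x, true)) * ((ν : ℂ) - u x) ^ 2‖ ≤ κ⁻¹ := by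
    intro x ν hν
    have a : ¬ (‖ff K E w u‖ < κ * ‖ff K E w (Function.update u x ν)‖) := fun h => ht1 x ⟨ν, hν, h⟩
    rw [not_lt, ff, ff, Mz_update, det_one_site _ G hMG hGsym, norm_mul] at a
    have b : 0 < ‖(Mz K E w u).det‖ := hf1
    rw [← one_div, le_div_iff₀ hκ]
    rw [← hM] at a b
    refine (mul_le_mul_iff_right₀ b).mp ?_
    linarith
  have two : ∀ x y, x ≠ y → ∀ ν : ℝ, (ν = 0 ∨ ν = 1 ∨ ν = -1) → ∀ ν' : ℝ, (ν' = 0 ∨ ν' = 1 ∨ ν' = -1) →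
      ‖(M + ((ν' : ℂ) - u x) • (sg x).map Complex.ofReal + ((ν : ℂ) - u y) • (sg y).map Complex.ofReal).det‖ ≤
        ‖M.det‖ * (κ⁻¹) ^ 2 := by
    intro x y hxy ν hν ν' hν'
    have a : ¬ (‖ff K E w u‖ < κ * ‖ff K E w (Function.update u y ν)‖) := fun h => ht1 y ⟨ν, hν, h⟩
    have b : ¬ (‖ff K E w (Function.update u y ν)‖ < κ * ‖ff K E w (Function.update (Function.update u y ν) x ν')‖) :=
      fun h => ht2 x y hxy ν hν ⟨ν', hν', h⟩
    have e : ff K E w (Function.update (Function.update u y ν) x ν') =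
      (M + ((ν' : ℂ) - u x) • (sg x).map Complex.ofReal + ((ν : ℂ) - u y) • (sg y).map Complex.ofReal).det := by
      rw [ff, Mz_update, Mz_update, Function.update_of_ne hxy]
      congr 1
      abel
    rw [← e]
    push Not at a b
    have c : κ ^ 2 * ‖ff K E w (Function.update (Function.update u y ν) x ν')‖ ≤ ‖ff K E w u‖ := by nlinarith
    have : ‖M.det‖ = ‖ff K E w u‖ := rfl
    rw [this, inv_pow, ← div_eq_mul_inv, le_div_iff₀ (by positivity)]
    linarith
  refine green_contra K hK u E w (25 * (κ⁻¹) ^ 2) hw hw1 (by nlinarith) v hv hXv M G rfl hMG ?_ ?_ ?_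
  · intro x
    have := (interp 1 (2 * G (x, false) (x, true)) _ (u x) κ⁻¹ (hu x) (by simpa using one x 0 (by simp))
      (by simpa using one x 1 (by simp)) (by simpa using one x (-1) (by simp))).1
    rw [norm_mul, Complex.norm_ofNat] at this
    nlinarith
  · intro x
    have := (interp 1 (2 * G (x, false) (x, true)) _ (u x) κ⁻¹ (hu x) (by simpa using one x 0 (by simp))
      (by simpa using one x 1 (by simp)) (by simpa using one x (-1) (by simp))).2
    nlinarith
  · intro x y hxy
    obtain ⟨a0, a1, b0, b2, c0, c1, c2, h⟩ := det_two_site M G hMG hGsym x y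
    have h' : ∀ ν : ℝ, (ν = 0 ∨ ν = 1 ∨ ν = -1) → ∀ ν' : ℝ, (ν' = 0 ∨ ν' = 1 ∨ ν' = -1) → _ :=
      fun ν hν ν' hν' => by
        have := two x y hxy ν hν ν' hν'
        rw [h, norm_mul] at this
        exact (mul_le_mul_iff_right₀ hf1).mp this
    have st : ∀ ν : ℝ, (ν = 0 ∨ ν = 1 ∨ ν = -1) → _ := fun ν hν =>
      (interp _ _ _ (u x) ((κ⁻¹) ^ 2) (hu x) (by simpa using h' ν hν 0 (by simp))
        (by simpa using h' ν hν 1 (by simp)) (by simpa using h' ν hν (-1) (by simp))).1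
    have := (interp _ _ _ (u y) (5 * (κ⁻¹) ^ 2) (hu y) (by simpa using st 0 (by simp))
      (by simpa using st 1 (by simp)) (by simpa using st (-1) (by simp))).1
    rw [norm_mul, Complex.norm_ofNat] at this
    nlinarith [norm_nonneg (2 * G (x, false) (x, true) * G (y, false) (y, true)
      - (G (x, false) (y, false) * G (x, true) (y, true)
        + G (x, false) (y, true) * G (x, true) (y, false)))]

end MLS

namespace MLS

lemma unif_apply (S : Set ℝ) : unif S = (2 : ENNReal)⁻¹ * volume (S ∩ Set.Icc (-1) 1) := by
  rw [unif, Measure.smul_apply, Measure.restrict_apply' measurableSet_Icc, ENNReal.smul_def]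
  simp

lemma unif_le_of_volume (S : Set ℝ) (c : ℝ) (h : volume (S ∩ Set.Icc (-1) 1) ≤ ENNReal.ofReal (2 * c)) :
    unif S ≤ ENNReal.ofReal c := by
  rw [unif_apply]
  rw [ENNReal.ofReal_mul (by norm_num)] at h
  calc (2 : ENNReal)⁻¹ * volume (S ∩ Set.Icc (-1) 1) ≤ 2⁻¹ * (ENNReal.ofReal 2 * ENNReal.ofReal c) := by gcongr
    _ = ENNReal.ofReal c := by
      rw [← mul_assoc]
      simp [ENNReal.inv_mul_cancel]

lemma three_points (S : Set ℝ) (θ : ℝ) (hθ : 0 < θ)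
    (h : ∀ a ∈ S, ∀ b ∈ S, ∀ c ∈ S, θ ≤ |a - b| → θ ≤ |a - c| → θ ≤ |b - c| → False) :
    volume S ≤ ENNReal.ofReal (4 * θ) := by
  by_cases h0 : S.Nonempty
  · obtain ⟨p, hp⟩ := h0
    by_cases h1 : ∃ q ∈ S, θ ≤ |p - q|
    · obtain ⟨q, hq, hpq⟩ := h1
      have : S ⊆ Set.Icc (p - θ) (p + θ) ∪ Set.Icc (q - θ) (q + θ) := by
        intro c hc
        by_contra hcon
        simp only [Set.mem_union, Set.mem_Icc, not_or] at hcon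
        refine h p hp q hq c hc hpq ?_ ?_
        · by_contra hh
          rw [not_le, abs_lt] at hh
          exact hcon.1 ⟨by linarith, by linarith⟩
        · by_contra hh
          rw [not_le, abs_lt] at hh
          exact hcon.2 ⟨by linarith, by linarith⟩
      refine (measure_mono this).trans ((measure_union_le _ _).trans ?_)
      rw [Real.volume_Icc, Real.volume_Icc, ← ENNReal.ofReal_add (by linarith) (by linarith)]
      apply ENNReal.ofReal_le_ofReal
      linarith
    · push Not at h1
      have : S ⊆ Set.Icc (p - θ) (p + θ) := by
        intro c hc
        have := abs_lt.mp (h1 c hc)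
        exact ⟨by linarith, by linarith⟩
      refine (measure_mono this).trans ?_
      rw [Real.volume_Icc]
      apply ENNReal.ofReal_le_ofReal
      linarith
  · rw [Set.not_nonempty_iff_eq_empty.mp h0]; simp

lemma sublevel (q0 q1 q2 : ℂ) (κ θ : ℝ) (hκ : 0 < κ) (hθ : 0 < θ) (hκθ : 12 * κ ≤ θ ^ 2) :
    unif {τ : ℝ | ∃ ν : ℝ, (ν = 0 ∨ ν = 1 ∨ ν = -1) ∧
      ‖q0 + q1 * τ + q2 * τ ^ 2‖ < κ * ‖q0 + q1 * ν + q2 * ν ^ 2‖} ≤ ENNReal.ofReal (2 * θ) := by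
  set q : ℝ → ℂ := fun τ => q0 + q1 * τ + q2 * τ ^ 2 with hq
  obtain ⟨m, hm1, hm⟩ : ∃ m : ℝ, |m| ≤ 1 ∧ ∀ ν : ℝ, (ν = 0 ∨ ν = 1 ∨ ν = -1) → ‖q ν‖ ≤ ‖q m‖ := by
    obtain ⟨m, hm, h⟩ := Finset.exists_max_image ({0, 1, -1} : Finset ℝ) (fun ν => ‖q ν‖) ⟨0, by simp⟩
    refine ⟨m, ?_, fun ν hν => h ν (by simpa using hν)⟩
    simp at hm
    rcases hm with h | h | h <;> simp [h]
  apply unif_le_of_volume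
  have e : 2 * (2 * θ) = 4 * θ := by ring
  rw [e]
  apply three_points _ _ hθ
  rintro a ⟨⟨ν1, hν1, ha⟩, ha1⟩ b ⟨⟨ν2, hν2, hb⟩, hb1⟩ c ⟨⟨ν3, hν3, hc⟩, hc1⟩ hab hac hbc
  have ha' : ‖q a‖ < κ * ‖q m‖ := lt_of_lt_of_le ha (by gcongr; exact hm _ hν1)
  have hb' : ‖q b‖ < κ * ‖q m‖ := lt_of_lt_of_le hb (by gcongr; exact hm _ hν2)
  have hc' : ‖q c‖ < κ * ‖q m‖ := lt_of_lt_of_le hc (by gcongr; exact hm _ hν3)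
  have nab : a - b ≠ 0 := fun h => by rw [h] at hab; simp at hab; linarith
  have nac : a - c ≠ 0 := fun h => by rw [h] at hac; simp at hac; linarith
  have nbc : b - c ≠ 0 := fun h => by rw [h] at hbc; simp at hbc; linarith
  have lag : q m = q a * (((m - b) * (m - c) / ((a - b) * (a - c)) : ℝ) : ℂ)
      + q b * (((m - a) * (m - c) / ((a - b) * (b - c)) : ℝ) : ℂ) * (-1)
      + q c * (((m - a) * (m - b) / ((a - c) * (b - c)) : ℝ) : ℂ) := by
    have n1 : (a : ℂ) - b ≠ 0 := by exact_mod_cast nab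
    have n2 : (a : ℂ) - c ≠ 0 := by exact_mod_cast nac
    have n3 : (b : ℂ) - c ≠ 0 := by exact_mod_cast nbc
    simp only [hq]
    push_cast
    field_simp
    ring
  have co : ∀ p r s t : ℝ, |p| ≤ 1 → |r| ≤ 1 → θ ≤ |s| → θ ≤ |t| →
      ‖(((m - p) * (m - r) / (s * t) : ℝ) : ℂ)‖ ≤ 4 / θ ^ 2 := by
    intro p r s t hp hr hs ht
    rw [Complex.norm_real, Real.norm_eq_abs, abs_div, abs_mul, abs_mul]
    have h1 : |m - p| ≤ 2 := (abs_sub _ _).trans (by linarith)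
    have h2 : |m - r| ≤ 2 := (abs_sub _ _).trans (by linarith)
    calc |m - p| * |m - r| / (|s| * |t|) ≤ 2 * 2 / (θ * θ) := by gcongr
      _ = _ := by ring
  have A1 : |a| ≤ 1 := abs_le.mpr ha1
  have B1 : |b| ≤ 1 := abs_le.mpr hb1
  have C1 : |c| ≤ 1 := abs_le.mpr hc1
  have pm : 0 < ‖q m‖ := by
    by_contra h
    have := norm_nonneg (q a)
    nlinarith
  have fin : ‖q m‖ < 3 * (κ * ‖q m‖ * (4 / θ ^ 2)) := by
    have p4 : 0 < 4 / θ ^ 2 := by positivity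
    have k1 := co b c (a - b) (a - c) B1 C1 hab hac
    have k2 := co a c (a - b) (b - c) A1 C1 hab hbc
    have k3 := co a b (a - c) (b - c) A1 B1 hac hbc
    have l1 : ‖q a‖ * ‖(((m - b) * (m - c) / ((a - b) * (a - c)) : ℝ) : ℂ)‖ < κ * ‖q m‖ * (4 / θ ^ 2) :=
      lt_of_le_of_lt (by gcongr) (mul_lt_mul_of_pos_right ha' p4)
    have l2 : ‖q b‖ * ‖(((m - a) * (m - c) / ((a - b) * (b - c)) : ℝ) : ℂ)‖ < κ * ‖q m‖ * (4 / θ ^ 2) :=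
      lt_of_le_of_lt (by gcongr) (mul_lt_mul_of_pos_right hb' p4)
    have l3 : ‖q c‖ * ‖(((m - a) * (m - b) / ((a - c) * (b - c)) : ℝ) : ℂ)‖ < κ * ‖q m‖ * (4 / θ ^ 2) :=
      lt_of_le_of_lt (by gcongr) (mul_lt_mul_of_pos_right hc' p4)
    have n := (congrArg norm lag).le.trans
      ((norm_add_le _ _).trans (add_le_add (norm_add_le _ _) le_rfl))
    rw [norm_mul, norm_mul, norm_mul, norm_mul, norm_neg, norm_one, mul_one] at n
    linarith
  have : 3 * (κ * ‖q m‖ * (4 / θ ^ 2)) ≤ ‖q m‖ := by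
    have : 3 * (κ * ‖q m‖ * (4 / θ ^ 2)) = ‖q m‖ * (12 * κ / θ ^ 2) := by ring
    rw [this]
    exact mul_le_of_le_one_right pm.le ((div_le_one (by positivity)).mpr hκθ)
  linarith

variable {ι : Type*} [Fintype ι] [DecidableEq ι]

instance : IsProbabilityMeasure (unifPi ι) := by unfold unifPi; infer_instance

lemma measurable_upd (x : ι) : Measurable (fun p : (ι → ℝ) × ℝ => Function.update p.1 x p.2) := by
  rw [measurable_pi_iff]
  intro i
  by_cases h : i = x
  · subst h; simpa using measurable_snd
  · simp only [Function.update_of_ne h]; exact (measurable_pi_apply i).comp measurable_fst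

lemma map_upd (x : ι) : Measure.map (fun p : (ι → ℝ) × ℝ => Function.update p.1 x p.2)
    ((unifPi ι).prod unif) = unifPi ι := by
  symm
  apply Measure.pi_eq
  intro s hs
  rw [Measure.map_apply (measurable_upd x) (MeasurableSet.univ_pi hs)]
  have : (fun p : (ι → ℝ) × ℝ => Function.update p.1 x p.2) ⁻¹' (Set.univ.pi s) =
      (Set.univ.pi (Function.update s x Set.univ)) ×ˢ (s x) := by
    ext ⟨u, τ⟩
    simp only [Set.mem_preimage, Set.mem_pi, Set.mem_univ, true_implies, Set.mem_prod]
    constructor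
    · intro h
      refine ⟨fun i => ?_, by simpa using h x⟩
      by_cases hi : i = x
      · subst hi; simp
      · simpa [Function.update_of_ne hi] using h i
    · rintro ⟨h1, h2⟩ i
      by_cases hi : i = x
      · subst hi; simpa using h2
      · simpa [Function.update_of_ne hi] using h1 i
  rw [this, Measure.prod_prod, unifPi, Measure.pi_pi, ← Finset.mul_prod_erase _ _ (Finset.mem_univ x),
    ← Finset.mul_prod_erase Finset.univ (fun i => unif (s i)) (Finset.mem_univ x)]
  have : ∏ i ∈ Finset.univ.erase x, unif (Function.update s x Set.univ i) = ∏ i ∈ Finset.univ.erase x, unif (s i) := by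
    refine Finset.prod_congr rfl fun i hi => ?_
    rw [Function.update_of_ne (Finset.ne_of_mem_erase hi)]
  rw [this]
  simp [mul_comm]

lemma slice_eq (x : ι) (S : Set (ι → ℝ)) (hS : MeasurableSet S) :
    unifPi ι S = ∫⁻ u, unif {τ | Function.update u x τ ∈ S} ∂(unifPi ι) := by
  conv_lhs => rw [← map_upd x]
  rw [Measure.map_apply (measurable_upd x) hS, Measure.prod_apply ((measurable_upd x) hS)]
  rfl

lemma slice_meas (x : ι) (S : Set (ι → ℝ)) (hS : MeasurableSet S) :
    Measurable fun u => unif {τ | Function.update u x τ ∈ S} :=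
  measurable_measure_prodMk_left ((measurable_upd x) hS)

lemma step (x : ι) (A A' T : Set (ι → ℝ)) (hT : MeasurableSet T) (c : ENNReal)
    (h1 : ∀ u ∈ A, ∀ τ, Function.update u x τ ∈ A')
    (h2 : ∀ u, unif {τ | Function.update u x τ ∈ T} ≤ c) :
    unifPi ι (A ∩ T) ≤ c * unifPi ι A' := by
  set Q := toMeasurable (unifPi ι) A' with hQ
  have hQm : MeasurableSet Q := measurableSet_toMeasurable _ _
  set B : Set (ι → ℝ) := {u | unif {τ | Function.update u x τ ∈ Q} = 1} with hB
  have hBm : MeasurableSet B := (slice_meas x Q hQm) (measurableSet_singleton 1)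
  have hAB : A ⊆ B := by
    intro u hu
    have : {τ | Function.update u x τ ∈ Q} = Set.univ := by
      ext τ; simpa using subset_toMeasurable _ _ (h1 u hu τ)
    simp only [hB, Set.mem_ofPred_eq, this, measure_univ]
  have hinv : ∀ u τ, Function.update u x τ ∈ B ↔ u ∈ B := by
    intro u τ
    simp [hB]
  calc unifPi ι (A ∩ T) ≤ unifPi ι (B ∩ T) := measure_mono (Set.inter_subset_inter_left _ hAB)
    _ = ∫⁻ u, unif {τ | Function.update u x τ ∈ B ∩ T} ∂(unifPi ι) := slice_eq x _ (hBm.inter hT)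
    _ ≤ ∫⁻ u, c * B.indicator 1 u ∂(unifPi ι) := by
      refine lintegral_mono fun u => ?_
      by_cases hu : u ∈ B
      · simp only [Set.indicator_of_mem hu, Pi.one_apply, mul_one]
        exact (measure_mono fun τ h => h.2).trans (h2 u)
      · have : {τ | Function.update u x τ ∈ B ∩ T} = ∅ := by
          ext τ; simp [hinv, hu]
        rw [this, measure_empty]; exact zero_le
    _ = c * ∫⁻ u, B.indicator 1 u ∂(unifPi ι) := lintegral_const_mul _ (measurable_one.indicator hBm)
    _ ≤ c * ∫⁻ u, unif {τ | Function.update u x τ ∈ Q} ∂(unifPi ι) := by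
      gcongr with u
      by_cases hu : u ∈ B
      · simp only [Set.indicator_of_mem hu, Pi.one_apply]
        exact hu.symm.le
      · simp [hu]
    _ = c * unifPi ι A' := by rw [← slice_eq x _ hQm, hQ, measure_toMeasurable]

end MLS

namespace MLS

variable {ι : Type*} [Fintype ι] [DecidableEq ι]

/-- Configurations with at least `N` approximate eigenvalues within `w` of `E`. -/
def AN (K : Matrix ι ι ℝ) (E w : ℝ) (N : ℕ) : Set (ι → ℝ) :=
  {u | ∃ W : Submodule ℝ (ι × Bool → ℝ), N ≤ Module.finrank ℝ W ∧
    ∀ v ∈ W, ∑ i, (((Hab K u) *ᵥ v) i - E * v i) ^ 2 ≤ w ^ 2 * ∑ i, (v i) ^ 2}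

lemma sg_mulVec (x : ι) (v : ι × Bool → ℝ) (h : ∀ b, v (x, b) = 0) : sg x *ᵥ v = 0 := by
  ext i
  simp only [Matrix.mulVec, dotProduct, sg, Pi.zero_apply]
  refine Finset.sum_eq_zero fun j _ => ?_
  obtain ⟨z, b⟩ := j
  by_cases hz : z = x
  · subst hz; simp [h]
  · simp [hz]

lemma AN_update (K : Matrix ι ι ℝ) (E w : ℝ) (N : ℕ) (x : ι) (u : ι → ℝ) (hu : u ∈ AN K E w (N + 2))
    (τ : ℝ) : Function.update u x τ ∈ AN K E w N := by
  obtain ⟨W, hW, h⟩ := hu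
  let f : W →ₗ[ℝ] (Bool → ℝ) :=
    { toFun := fun v b => v.1 (x, b)
      map_add' := fun _ _ => rfl
      map_smul' := fun _ _ => rfl }
  refine ⟨(LinearMap.ker f).map W.subtype, ?_, ?_⟩
  · rw [Submodule.finrank_map_subtype_eq]
    have h1 := LinearMap.finrank_range_add_finrank_ker f
    have h2 : Module.finrank ℝ (LinearMap.range f) ≤ 2 := by
      have := Submodule.finrank_le (LinearMap.range f)
      simpa using this
    omega
  · rintro v ⟨v', hv', rfl⟩
    have h0 : ∀ b, (W.subtype v') (x, b) = 0 := fun b => congrFun (LinearMap.mem_ker.mp hv') b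
    rw [Hab_update, Matrix.add_mulVec, Matrix.smul_mulVec, sg_mulVec x _ h0, smul_zero, add_zero]
    exact h _ v'.2

lemma ff_continuous (K : Matrix ι ι ℝ) (E w : ℝ) : Continuous (ff K E w) := by
  unfold ff Mz
  apply Continuous.matrix_det
  apply Continuous.sub _ continuous_const
  refine Continuous.matrix_map ?_ Complex.continuous_ofReal
  refine continuous_matrix fun i j => ?_
  unfold Hab
  refine continuous_const.add ?_
  split_ifs <;> fun_prop

lemma continuous_upd (x : ι) (ν : ℝ) : Continuous fun u : ι → ℝ => Function.update u x ν :=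
  continuous_id.update x continuous_const

lemma Atyp_open (K : Matrix ι ι ℝ) (E w κ : ℝ) (x : ι) : IsOpen (Atyp K E w κ x) := by
  have : Atyp K E w κ x = ⋃ ν : ℝ, ⋃ (_ : ν = 0 ∨ ν = 1 ∨ ν = -1),
      {u | ‖ff K E w u‖ < κ * ‖ff K E w (Function.update u x ν)‖} := by
    ext u; simp only [Atyp, Set.mem_iUnion, Set.mem_ofPred_eq, exists_prop]
  rw [this]
  refine isOpen_iUnion fun ν => isOpen_iUnion fun _ => ?_
  exact isOpen_lt (ff_continuous K E w).norm
    (continuous_const.mul ((ff_continuous K E w).comp (continuous_upd x ν)).norm)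

lemma Atyp_slice (K : Matrix ι ι ℝ) (hK : K.IsSymm) (E w κ θ : ℝ) (hw : 0 < w) (hκ : 0 < κ)
    (hθ : 0 < θ) (hκθ : 12 * κ ≤ θ ^ 2) (x : ι) (u : ι → ℝ) :
    unif {τ | Function.update u x τ ∈ Atyp K E w κ x} ≤ ENNReal.ofReal (2 * θ) := by
  -- use the base point `update u x 0`
  set u0 := Function.update u x 0 with hu0
  have hU : IsUnit (Mz K E w u0).det := isUnit_iff_ne_zero.mpr (ff_ne K hK E w hw u0)
  have hMG : Mz K E w u0 * (Mz K E w u0)⁻¹ = 1 := Matrix.mul_nonsing_inv _ hU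
  have hMs : (Mz K E w u0)ᵀ = Mz K E w u0 := by
    rw [Mz]; ext i j
    have := (Hab_symm K hK u0).apply i j
    simp [Matrix.one_apply, this, eq_comm]
  set G := (Mz K E w u0)⁻¹ with hG
  have hGsym : ∀ i j, G i j = G j i := fun i j => by
    have : Gᵀ = G := by rw [hG, Matrix.transpose_nonsing_inv, hMs]
    conv_lhs => rw [← this]
    rfl
  have key : ∃ q0 q1 q2 : ℂ, ∀ τ : ℝ, ff K E w (Function.update u x τ) = q0 + q1 * τ + q2 * τ ^ 2 := by
    refine ⟨(Mz K E w u0).det, (Mz K E w u0).det * (2 * G (x, false) (x, true)),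
      (Mz K E w u0).det * (G (x, false) (x, true) ^ 2 - G (x, false) (x, false) * G (x, true) (x, true)), fun τ => ?_⟩
    have : Function.update u x τ = Function.update u0 x τ := by simp [hu0]
    rw [this, ff, Mz_update, det_one_site _ G hMG hGsym]
    simp [hu0]
    ring
  obtain ⟨q0, q1, q2, h⟩ := key
  refine le_trans (measure_mono ?_) (sublevel q0 q1 q2 κ θ hκ hθ hκθ)
  rintro τ ⟨ν, hν, hh⟩
  refine ⟨ν, hν, ?_⟩
  rw [Function.update_idem, h, h] at hh
  exact hh

lemma cube_ae : ∀ᵐ u ∂(unifPi ι), ∀ x, |u x| ≤ 1 := by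
  rw [ae_all_iff]
  intro x
  have h1 : unif {τ : ℝ | ¬ |τ| ≤ 1} = 0 := by
    rw [unif_apply]
    have : {τ : ℝ | ¬ |τ| ≤ 1} ∩ Set.Icc (-1) 1 = ∅ := by
      ext τ
      simp only [Set.mem_inter_iff, Set.mem_ofPred_eq, Set.mem_Icc, Set.mem_empty_iff_false, iff_false, abs_le]
      tauto
    rw [this]; simp
  have h2 : ∀ᵐ τ ∂unif, |τ| ≤ 1 := h1
  exact (Measure.quasiMeasurePreserving_eval (fun _ : ι => unif) x).ae h2

lemma AN_rec (K : Matrix ι ι ℝ) (hK : K.IsSymm) (E w κ θ : ℝ) (hw : 0 < w) (hw1 : w ≤ 1) (hκ : 0 < κ)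
    (hκ1 : κ ≤ 1) (hθ : 0 < θ) (hκθ : 12 * κ ≤ θ ^ 2)
    (hsmall : 200 * (Fintype.card ι : ℝ) ^ 3 * (25 * (κ⁻¹) ^ 2) ^ 2 * Real.sqrt w < 1) (N : ℕ) :
    unifPi ι (AN K E w (N + 2)) ≤
      ((Fintype.card ι : ENNReal) + 3 * (Fintype.card ι) ^ 2) * ENNReal.ofReal (2 * θ) * unifPi ι (AN K E w N) := by
  set c := ENNReal.ofReal (2 * θ) with hc
  set m := unifPi ι (AN K E w N) with hm
  set A := AN K E w (N + 2) with hA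
  let T : ι × ι × Fin 3 → Set (ι → ℝ) := fun p =>
    if p.1 = p.2.1 then ∅ else {u | Function.update u p.2.1 (![0, 1, -1] p.2.2) ∈ Atyp K E w κ p.1}
  have hsub : A ≤ᵐ[unifPi ι] ((⋃ y, A ∩ Atyp K E w κ y) ∪ ⋃ p, A ∩ T p : Set (ι → ℝ)) := by
    filter_upwards [cube_ae (ι := ι)] with u hu huA
    by_contra hcon
    have hcon' : u ∉ ((⋃ y, A ∩ Atyp K E w κ y) ∪ ⋃ p, A ∩ T p : Set (ι → ℝ)) := hcon
    simp only [Set.mem_union, Set.mem_iUnion, Set.mem_inter_iff, not_or, not_exists, not_and] at hcon'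
    have huA' : u ∈ A := huA
    obtain ⟨W, hW, h⟩ := id huA'
    have : ∃ v ∈ W, v ≠ 0 := by
      have : W ≠ ⊥ := by
        rintro rfl
        simp at hW
      exact (Submodule.ne_bot_iff W).mp this
    obtain ⟨v, hvW, hv⟩ := this
    refine absurd (typ_contra K hK u hu E w κ hw hw1 hκ hκ1 v hv (h v hvW) (fun x => hcon'.1 x huA') ?_) (not_le.mpr hsmall)
    intro x y hxy ν hν
    rcases hν with rfl | rfl | rfl
    · have := hcon'.2 (x, y, 0) huA'
      simpa [T, hxy] using this
    · have := hcon'.2 (x, y, 1) huA'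
      simpa [T, hxy] using this
    · have := hcon'.2 (x, y, 2) huA'
      simpa [T, hxy] using this
  have b1 : ∀ y, unifPi ι (A ∩ Atyp K E w κ y) ≤ c * m := fun y =>
    step y A _ _ (Atyp_open K E w κ y).measurableSet c (fun u hu τ => AN_update K E w N y u hu τ)
      (fun u => Atyp_slice K hK E w κ θ hw hκ hθ hκθ y u)
  have b2 : ∀ p, unifPi ι (A ∩ T p) ≤ c * m := by
    rintro ⟨x, y, k⟩
    by_cases hxy : x = y
    · simp [T, hxy]
    · have hT : T (x, y, k) = (fun u => Function.update u y (![0, 1, -1] k)) ⁻¹' Atyp K E w κ x := by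
        simp [T, hxy]; rfl
      rw [hT]
      refine step x A _ _ ((Atyp_open K E w κ x).preimage (continuous_upd y _)).measurableSet c
        (fun u hu τ => AN_update K E w N x u hu τ) (fun u => ?_)
      have := Atyp_slice K hK E w κ θ hw hκ hθ hκθ x (Function.update u y (![0, 1, -1] k))
      refine le_trans (le_of_eq ?_) this
      congr 1
      ext τ
      show Function.update (Function.update u x τ) y _ ∈ Atyp K E w κ x ↔
        Function.update (Function.update u y _) x τ ∈ Atyp K E w κ x
      rw [Function.update_comm hxy]
  calc unifPi ι A ≤ unifPi ι ((⋃ y, A ∩ Atyp K E w κ y) ∪ ⋃ p, A ∩ T p : Set (ι → ℝ)) := measure_mono_ae hsub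
    _ ≤ unifPi ι (⋃ y, A ∩ Atyp K E w κ y) + unifPi ι (⋃ p, A ∩ T p) := measure_union_le _ _
    _ ≤ ∑ y, unifPi ι (A ∩ Atyp K E w κ y) + ∑ p, unifPi ι (A ∩ T p) :=
      add_le_add (measure_iUnion_fintype_le _ _) (measure_iUnion_fintype_le _ _)
    _ ≤ ∑ _y : ι, c * m + ∑ _p : ι × ι × Fin 3, c * m :=
      add_le_add (Finset.sum_le_sum fun y _ => b1 y) (Finset.sum_le_sum fun p _ => b2 p)
    _ = _ := by
      simp only [Finset.sum_const, Finset.card_univ, Fintype.card_prod, Fintype.card_fin, nsmul_eq_mul]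
      push_cast
      ring

lemma AN_pow (K : Matrix ι ι ℝ) (hK : K.IsSymm) (E w κ θ : ℝ) (hw : 0 < w) (hw1 : w ≤ 1) (hκ : 0 < κ)
    (hκ1 : κ ≤ 1) (hθ : 0 < θ) (hκθ : 12 * κ ≤ θ ^ 2)
    (hsmall : 200 * (Fintype.card ι : ℝ) ^ 3 * (25 * (κ⁻¹) ^ 2) ^ 2 * Real.sqrt w < 1) (k : ℕ) :
    unifPi ι (AN K E w (2 * k)) ≤
      (((Fintype.card ι : ENNReal) + 3 * (Fintype.card ι) ^ 2) * ENNReal.ofReal (2 * θ)) ^ k := by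
  induction k with
  | zero => simpa using prob_le_one
  | succ k ih =>
    rw [pow_succ', mul_add]
    exact (AN_rec K hK E w κ θ hw hw1 hκ hκ1 hθ hκθ hsmall _).trans (by gcongr)

end MLS

namespace MLS

section abs
variable {E : Type*} [NormedAddCommGroup E] [InnerProductSpace ℝ E] [FiniteDimensional ℝ E]

/-- A spectral cluster `W` of `T` near `e` with its reduced resolvent `R`. -/
structure Clus (T : E →ₗ[ℝ] E) (e : ℝ) (W : Submodule ℝ E) (R : E →ₗ[ℝ] E) (ρ r : ℝ) : Prop where
  close : ∀ v ∈ W, ‖T v - e • v‖ ≤ ρ * ‖v‖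
  inv : ∀ v, R (T v - e • v) = v - W.starProjection v
  bd : ∀ v, ‖R v‖ ≤ ‖v‖ / r
  ker : ∀ v ∈ W, R v = 0

lemma Clus.compare {T T' : E →ₗ[ℝ] E} {e e' : ℝ} {W W' : Submodule ℝ E} {R R' D F : E →ₗ[ℝ] E}
    {ρ r θ t : ℝ} (h : Clus T e W R ρ r) (h' : Clus T' e' W' R' ρ r)
    (hr : 0 < r) (hρ : 0 ≤ ρ) (hT' : T' = T + t • D + F) (hD : ∀ v, ‖D v‖ ≤ ‖v‖)
    (hF : ∀ v, ‖F v‖ ≤ ρ * ‖v‖) (hθ : |e' - e| ≤ θ) (hθr : θ ≤ r / 2)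
    (ξ : E) (hξ : ξ ∈ W') :
    ∃ η : E, ‖η‖ ≤ 2 * ρ * ‖ξ‖ ∧ T ξ - e • ξ = (e' - e) • ξ - t • D ξ + η ∧
      ξ - W.starProjection ξ = (e' - e) • R (ξ - W.starProjection ξ) - t • R (D ξ) + R η ∧
      ‖ξ - W.starProjection ξ‖ ≤ 2 * (|t| + 2 * ρ) / r * ‖ξ‖ := by
  set η := (T' ξ - e' • ξ) - F ξ with hη
  have n1 : ‖η‖ ≤ 2 * ρ * ‖ξ‖ := by
    have := h'.close ξ hξ
    have := hF ξ
    refine (norm_sub_le _ _).trans (by linarith)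
  have e1 : T ξ - e • ξ = (e' - e) • ξ - t • D ξ + η := by
    rw [hη, hT']
    simp only [LinearMap.add_apply, LinearMap.smul_apply]
    module
  have hP : W.starProjection ξ ∈ W := W.starProjection_apply_mem ξ
  have e2 : ξ - W.starProjection ξ = (e' - e) • R (ξ - W.starProjection ξ) - t • R (D ξ) + R η := by
    have i1 := h.inv ξ
    rw [e1] at i1
    rw [map_sub R ξ, h.ker _ hP, sub_zero, ← i1]
    simp only [map_add, map_sub, map_smul]
  refine ⟨η, n1, e1, e2, ?_⟩
  set Q := ξ - W.starProjection ξ with hQ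
  have a1 : ‖R Q‖ ≤ ‖Q‖ / r := h.bd _
  have a2 : ‖R (D ξ)‖ ≤ ‖ξ‖ / r := (h.bd _).trans (by gcongr; exact hD ξ)
  have a3 : ‖R η‖ ≤ 2 * ρ * ‖ξ‖ / r := (h.bd _).trans (by gcongr)
  have hθ0 : 0 ≤ θ := (abs_nonneg _).trans hθ
  have a4 : ‖Q‖ ≤ θ * (‖Q‖ / r) + |t| * (‖ξ‖ / r) + 2 * ρ * ‖ξ‖ / r := by
    calc ‖Q‖ = ‖(e' - e) • R Q - t • R (D ξ) + R η‖ := congrArg norm e2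
      _ ≤ ‖(e' - e) • R Q‖ + ‖t • R (D ξ)‖ + ‖R η‖ :=
        (norm_add_le _ _).trans (add_le_add (norm_sub_le _ _) le_rfl)
      _ ≤ _ := by
        rw [norm_smul, norm_smul, Real.norm_eq_abs, Real.norm_eq_abs]
        gcongr
  have a5 : θ * (‖Q‖ / r) ≤ ‖Q‖ / 2 := by
    calc θ * (‖Q‖ / r) ≤ r / 2 * (‖Q‖ / r) := by gcongr
      _ = _ := by field_simp
  have : 2 * (|t| + 2 * ρ) / r * ‖ξ‖ = 2 * (|t| * (‖ξ‖ / r) + 2 * ρ * ‖ξ‖ / r) := by ring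
  rw [this]
  linarith

lemma Clus.lift {T T' : E →ₗ[ℝ] E} {e e' : ℝ} {W W' : Submodule ℝ E} {R R' D F : E →ₗ[ℝ] E}
    {ρ r θ t : ℝ} (h : Clus T e W R ρ r) (h' : Clus T' e' W' R' ρ r)
    (hr : 0 < r) (hρ : 0 ≤ ρ) (hT' : T' = T + t • D + F) (hD : ∀ v, ‖D v‖ ≤ ‖v‖)
    (hF : ∀ v, ‖F v‖ ≤ ρ * ‖v‖) (hθ : |e' - e| ≤ θ) (hθr : θ ≤ r / 2)
    (hdim : Module.finrank ℝ W = Module.finrank ℝ W') (hsm : |t| + 2 * ρ ≤ r / 4)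
    (ψ : E) (hψ : ψ ∈ W) : ∃ ξ ∈ W', W.starProjection ξ = ψ ∧ ‖ξ‖ ≤ 2 * ‖ψ‖ := by
  have half : ∀ ξ ∈ W', ‖ξ - W.starProjection ξ‖ ≤ ‖ξ‖ / 2 := by
    intro ξ hξ
    obtain ⟨η, -, -, -, hq⟩ := h.compare h' hr hρ hT' hD hF hθ hθr ξ hξ
    refine hq.trans ?_
    have : 2 * (|t| + 2 * ρ) / r ≤ 1 / 2 := by rw [div_le_iff₀ hr]; linarith
    nlinarith [norm_nonneg ξ]
  have two : ∀ ξ ∈ W', ‖ξ‖ ≤ 2 * ‖W.starProjection ξ‖ := by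
    intro ξ hξ
    have h1 := half ξ hξ
    have h2 := norm_sub_norm_le ξ (W.starProjection ξ)
    linarith
  let f : W' →ₗ[ℝ] W := (W.orthogonalProjectionOnto : E →ₗ[ℝ] W) ∘ₗ W'.subtype
  have hf : ∀ ξ : W', (f ξ : E) = W.starProjection ξ := fun ξ => rfl
  have hinj : Function.Injective f := by
    rw [injective_iff_map_eq_zero]
    intro ξ hξ
    have h1 := two ξ ξ.2
    rw [← hf, hξ] at h1
    simp at h1
    exact h1
  have hsurj : Function.Surjective f := (LinearMap.injective_iff_surjective_of_finrank_eq_finrank hdim.symm).mp hinj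
  obtain ⟨ξ, hξ⟩ := hsurj ⟨ψ, hψ⟩
  have hp : W.starProjection (ξ : E) = ψ := by rw [← hf, hξ]
  exact ⟨ξ, ξ.2, hp, by rw [← hp]; exact two ξ ξ.2⟩

/-- Isolation in the first (off-diagonal) case. -/
lemma Clus.iso1 {T T' : E →ₗ[ℝ] E} {e e' : ℝ} {W W' : Submodule ℝ E} {R R' D F : E →ₗ[ℝ] E}
    {ρ r θ t κ : ℝ} (h : Clus T e W R ρ r) (h' : Clus T' e' W' R' ρ r)
    (hr : 0 < r) (hρ : 0 ≤ ρ) (hT' : T' = T + t • D + F) (hD : ∀ v, ‖D v‖ ≤ ‖v‖)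
    (hF : ∀ v, ‖F v‖ ≤ ρ * ‖v‖) (hθ : |e' - e| ≤ θ) (hθr : θ ≤ r / 2)
    (hdim : Module.finrank ℝ W = Module.finrank ℝ W') (hsymm : T.IsSymmetric)
    (hκ : 0 < κ) (hκ1 : κ ≤ 1) (hsm : |t| + 2 * ρ ≤ κ * r / 8)
    (ψ ψ' : E) (hψ : ψ ∈ W) (hψ' : ψ' ∈ W) (n1 : ‖ψ‖ = 1) (n2 : ‖ψ'‖ = 1)
    (ho : inner ℝ ψ' ψ = 0) (hk : κ ≤ |inner ℝ ψ' (D ψ)|) : |t| ≤ 12 * ρ / κ := by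
  have hsm' : |t| + 2 * ρ ≤ r / 4 := by nlinarith
  obtain ⟨ξ, hξ, hp, hn⟩ := h.lift h' hr hρ hT' hD hF hθ hθr hdim hsm' ψ hψ
  obtain ⟨η, hη, e1, -, hq⟩ := h.compare h' hr hρ hT' hD hF hθ hθr ξ hξ
  rw [n1] at hn
  rw [hp] at hq
  have o2 : inner ℝ ψ' ξ = 0 := by
    have := W.starProjection_inner_eq_zero ξ ψ' hψ'
    rw [hp, real_inner_comm, inner_sub_right, ho] at this
    linarith
  have b1 : |inner ℝ ψ' (T ξ - e • ξ)| ≤ 2 * ρ := by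
    have : inner ℝ ψ' (T ξ - e • ξ) = inner ℝ (T ψ' - e • ψ') ξ := by
      rw [inner_sub_right, inner_sub_left, ← hsymm, inner_smul_right, real_inner_smul_left]
    rw [this]
    refine (abs_real_inner_le_norm _ _).trans ?_
    have := h.close ψ' hψ'
    rw [n2, mul_one] at this
    calc _ ≤ ρ * 2 := by gcongr; linarith
      _ = _ := by ring
  have b2 : |inner ℝ ψ' η| ≤ 4 * ρ := by
    refine (abs_real_inner_le_norm _ _).trans ?_
    rw [n2, one_mul]
    nlinarith
  have b3 : t * inner ℝ ψ' (D ξ) = inner ℝ ψ' η - inner ℝ ψ' (T ξ - e • ξ) := by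
    rw [e1, inner_add_right, inner_sub_right, inner_smul_right, inner_smul_right, o2]
    ring
  have b4 : |t| * |inner ℝ ψ' (D ξ)| ≤ 6 * ρ := by
    rw [← abs_mul, b3]
    refine (abs_sub _ _).trans (by linarith)
  have b5 : κ / 2 ≤ |inner ℝ ψ' (D ξ)| := by
    have e2 : inner ℝ ψ' (D ψ) = inner ℝ ψ' (D ξ) - inner ℝ ψ' (D (ξ - ψ)) := by
      rw [map_sub, inner_sub_right]; ring
    have c1 : |inner ℝ ψ' (D (ξ - ψ))| ≤ κ / 2 := by
      refine (abs_real_inner_le_norm _ _).trans ?_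
      rw [n2, one_mul]
      refine (hD _).trans (hq.trans ?_)
      calc 2 * (|t| + 2 * ρ) / r * ‖ξ‖ ≤ 2 * (κ * r / 8) / r * 2 := by gcongr; linarith
        _ = κ / 2 := by field_simp; norm_num
    rw [e2] at hk
    have := abs_sub (inner ℝ ψ' (D ξ)) (inner ℝ ψ' (D (ξ - ψ)))
    linarith
  rw [le_div_iff₀ hκ]
  nlinarith [abs_nonneg t]

/-- Isolation in the second case. -/
lemma Clus.iso2 {T T' : E →ₗ[ℝ] E} {e e' : ℝ} {W W' : Submodule ℝ E} {R R' D F S : E →ₗ[ℝ] E}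
    {ρ r θ t κ κ' : ℝ} (h : Clus T e W R ρ r) (h' : Clus T' e' W' R' ρ r)
    (hr : 0 < r) (hr1 : r ≤ 1) (hρ : 0 ≤ ρ) (hT' : T' = T + t • D + F) (hD : ∀ v, ‖D v‖ ≤ ‖v‖)
    (hF : ∀ v, ‖F v‖ ≤ ρ * ‖v‖) (hθ : |e' - e| ≤ θ) (hθr : θ ≤ κ' * r ^ 2 / 32)
    (hdim : Module.finrank ℝ W = Module.finrank ℝ W') (hSsymm : S.IsSymmetric)
    (hS : ∀ v, ‖S v‖ ≤ ‖v‖)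
    (hκ : 0 < κ) (hκ' : 0 < κ') (hκ1 : κ' ≤ 1) (ht : |t| ≤ κ' * r ^ 2 / 160) (hρκ : ρ ≤ κ * r / 8)
    (hρr : ρ ≤ r / 16)
    (hq1 : ∀ v ∈ W, |inner ℝ v (S v)| ≤ 3 * κ * ‖v‖ ^ 2)
    (hq2 : ∀ v ∈ W', |inner ℝ v (S v)| ≤ 3 * κ * ‖v‖ ^ 2)
    (ψ : E) (hψ : ψ ∈ W) (n1 : ‖ψ‖ = 1) 
    (hk : κ' ≤ |inner ℝ (S ψ) (R (D ψ))|) : |t| ≤ 16 * κ / κ' := by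
  have hr2 : κ' * r ^ 2 ≤ r := by
    have : κ' * r ^ 2 ≤ 1 * r ^ 2 := by gcongr
    nlinarith
  by_cases htρ : |t| ≤ 2 * ρ
  · rw [le_div_iff₀ hκ']
    have : ρ ≤ κ / 8 := by nlinarith
    nlinarith [abs_nonneg t]
  push Not at htρ
  obtain ⟨ξ, hξ, hp, hn⟩ := h.lift h' hr hρ hT' hD hF hθ (by linarith) hdim (by linarith) ψ hψ
  obtain ⟨η, hη, -, e2, hq⟩ := h.compare h' hr hρ hT' hD hF hθ (by linarith) ξ hξ
  rw [n1] at hn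
  rw [hp] at hq e2
  set Q := ξ - ψ with hQ
  have hξ' : ξ = ψ + Q := by rw [hQ]; abel
  have q1 : ‖Q‖ ≤ 8 * |t| / r := by
    refine hq.trans ?_
    calc 2 * (|t| + 2 * ρ) / r * ‖ξ‖ ≤ 2 * (|t| + |t|) / r * 2 := by gcongr; linarith
      _ = _ := by ring
  have z : Q = -(t • R (D ψ)) + ((e' - e) • R Q - t • R (D Q) + R η) := by
    conv_lhs => rw [e2, hξ']
    simp only [map_add, smul_add]
    abel
  set ζ := (e' - e) • R Q - t • R (D Q) + R η with hζ
  have hθ0 : 0 ≤ θ := (abs_nonneg _).trans hθ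
  have z1 : ‖ζ‖ ≤ θ * (8 * |t| / r / r) + |t| * (8 * |t| / r / r) + 4 * ρ / r := by
    have a1 : ‖R Q‖ ≤ 8 * |t| / r / r := (h.bd _).trans (by gcongr)
    have a2 : ‖R (D Q)‖ ≤ 8 * |t| / r / r := (h.bd _).trans (by gcongr; exact (hD Q).trans q1)
    have a3 : ‖R η‖ ≤ 4 * ρ / r := (h.bd _).trans (by gcongr; nlinarith)
    calc ‖ζ‖ ≤ ‖(e' - e) • R Q‖ + ‖t • R (D Q)‖ + ‖R η‖ :=
        (norm_add_le _ _).trans (add_le_add (norm_sub_le _ _) le_rfl)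
      _ ≤ _ := by
        rw [norm_smul, norm_smul, Real.norm_eq_abs, Real.norm_eq_abs]
        gcongr
  have f1 : inner ℝ ξ (S ξ) = inner ℝ ψ (S ψ) + 2 * inner ℝ (S ψ) Q + inner ℝ Q (S Q) := by
    rw [hξ', map_add, inner_add_left, inner_add_right, inner_add_right, ← hSsymm ψ Q,
      real_inner_comm Q (S ψ)]
    ring
  have f2 : inner ℝ (S ψ) Q = -(t * inner ℝ (S ψ) (R (D ψ))) + inner ℝ (S ψ) ζ := by
    conv_lhs => rw [z]
    rw [inner_add_right, inner_neg_right, inner_smul_right]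
  have nS : ‖S ψ‖ ≤ 1 := (hS ψ).trans n1.le
  have g1 : |inner ℝ (S ψ) ζ| ≤ ‖ζ‖ := by
    refine (abs_real_inner_le_norm _ _).trans ?_
    exact mul_le_of_le_one_left (norm_nonneg _) nS
  have g2 : |inner ℝ Q (S Q)| ≤ (8 * |t| / r) ^ 2 := by
    refine (abs_real_inner_le_norm _ _).trans ?_
    have := hS Q
    calc ‖Q‖ * ‖S Q‖ ≤ (8 * |t| / r) * (8 * |t| / r) := by gcongr; linarith
      _ = _ := by ring
  have g3 : |inner ℝ ξ (S ξ)| ≤ 12 * κ := by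
    refine (hq2 ξ hξ).trans ?_
    have : ‖ξ‖ ^ 2 ≤ 4 := by nlinarith [norm_nonneg ξ]
    nlinarith
  have g4 : |inner ℝ ψ (S ψ)| ≤ 3 * κ := by
    have := hq1 ψ hψ
    rw [n1] at this; linarith
  have g5 : |t| * κ' ≤ |t * inner ℝ (S ψ) (R (D ψ))| := by
    rw [abs_mul]; gcongr
  have m : |t * inner ℝ (S ψ) (R (D ψ))| ≤ 15 / 2 * κ + (8 * |t| / r) ^ 2 / 2 + ‖ζ‖ := by
    have e : t * inner ℝ (S ψ) (R (D ψ)) = inner ℝ (S ψ) ζ -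
      (inner ℝ ξ (S ξ) - inner ℝ ψ (S ψ) - inner ℝ Q (S Q)) / 2 := by linarith
    rw [e]
    rw [abs_le] at *
    constructor <;> linarith
  have k1 : (8 * |t| / r) ^ 2 / 2 + θ * (8 * |t| / r / r) + |t| * (8 * |t| / r / r) =
      |t| * ((40 * |t| + 8 * θ) / r ^ 2) := by field_simp; ring
  have k2 : (40 * |t| + 8 * θ) / r ^ 2 ≤ κ' / 2 := by
    rw [div_le_iff₀ (by positivity)]; linarith
  have k3 : 4 * ρ / r ≤ κ / 2 := by rw [div_le_iff₀ hr]; linarith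
  have k4 : |t| * ((40 * |t| + 8 * θ) / r ^ 2) ≤ |t| * (κ' / 2) := by gcongr
  rw [le_div_iff₀ hκ']
  linarith

/-- In a space of dimension at least two every vector has an orthogonal unit vector. -/
lemma exists_orth (W : Submodule ℝ E) (hW : 2 ≤ Module.finrank ℝ W) (v : E) :
    ∃ v' ∈ W, ‖v'‖ = 1 ∧ inner ℝ v' v = 0 := by
  let f : W →ₗ[ℝ] ℝ := (innerₛₗ ℝ v : E →ₗ[ℝ] ℝ) ∘ₗ W.subtype
  have h1 := LinearMap.finrank_range_add_finrank_ker f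
  have h2 : Module.finrank ℝ (LinearMap.range f) ≤ 1 := by
    have := Submodule.finrank_le (LinearMap.range f)
    simpa using this
  have h3 : LinearMap.ker f ≠ ⊥ := by
    intro h
    rw [h, finrank_bot] at h1
    omega
  obtain ⟨y, hy, hy0⟩ := Submodule.exists_mem_ne_zero_of_ne_bot h3
  have hy1 : inner ℝ v (y : E) = 0 := LinearMap.mem_ker.mp hy
  have hn : ‖(y : E)‖ ≠ 0 := by simpa using hy0
  refine ⟨‖(y : E)‖⁻¹ • (y : E), W.smul_mem _ y.2, ?_, ?_⟩
  · rw [norm_smul, norm_inv, norm_norm, inv_mul_cancel₀ hn]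
  · rw [real_inner_smul_left, real_inner_comm, hy1, mul_zero]

/-- Quadratic form bound from the off-diagonal bounds. -/
lemma form_bound (W : Submodule ℝ E) (hW : 2 ≤ Module.finrank ℝ W) (S : E →ₗ[ℝ] E) (hS : S.IsSymmetric)
    (a : E →ₗ[ℝ] ℝ) (ha : ∀ v, a v = 0 → inner ℝ v (S v) = 0) (κ : ℝ)
    (hκ : ∀ v ∈ W, ∀ v' ∈ W, ‖v‖ = 1 → ‖v'‖ = 1 → inner ℝ v' v = 0 → |inner ℝ v' (S v)| < κ)
    (v : E) (hv : v ∈ W) : |inner ℝ v (S v)| ≤ 3 * κ * ‖v‖ ^ 2 := by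
  have unit : ∀ v ∈ W, ‖v‖ = 1 → |inner ℝ v (S v)| ≤ 3 * κ := by
    intro v hv hn
    obtain ⟨v', hv', hn', ho⟩ : ∃ v' ∈ W, ‖v'‖ = 1 ∧ inner ℝ v' v = 0 :=
      exists_orth W hW v
    have hB := hκ v hv v' hv' hn hn' ho
    set A := inner ℝ v (S v) with hA
    set B := inner ℝ v' (S v) with hBdef
    set C := inner ℝ v' (S v') with hC
    have hB' : inner ℝ v (S v') = B := by rw [hBdef, ← hS, real_inner_comm]
    have hAC : |A - C| ≤ 2 * κ := by
      set s := Real.sqrt 2 with hs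
      have hs2 : s * s = 2 := Real.mul_self_sqrt (by norm_num)
      have hs0 : 0 < s := by positivity
      have np : ∀ σ : ℝ, σ ^ 2 = 1 → ‖s⁻¹ • (v + σ • v')‖ = 1 := by
        intro σ hσ
        have : ‖v + σ • v'‖ ^ 2 = 2 := by
          rw [norm_add_sq_real, inner_smul_right, real_inner_comm, ho, norm_smul, hn, hn', Real.norm_eq_abs,
            mul_one, sq_abs, hσ]
          norm_num
        have e : ‖v + σ • v'‖ = s := by rw [hs, ← this, Real.sqrt_sq (norm_nonneg _)]
        rw [norm_smul, e, Real.norm_eq_abs, abs_inv, abs_of_pos hs0, inv_mul_cancel₀ hs0.ne']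
      have := hκ (s⁻¹ • (v + (1 : ℝ) • v')) (W.smul_mem _ (W.add_mem hv (W.smul_mem _ hv')))
        (s⁻¹ • (v + (-1 : ℝ) • v')) (W.smul_mem _ (W.add_mem hv (W.smul_mem _ hv'))) (np 1 (by norm_num))
        (np (-1) (by norm_num)) (by
          simp only [inner_smul_left, inner_smul_right, inner_add_left, inner_add_right, ho, real_inner_comm v' v,
            real_inner_self_eq_norm_sq, hn, hn']
          simp)
      have e : inner ℝ (s⁻¹ • (v + (-1 : ℝ) • v')) (S (s⁻¹ • (v + (1 : ℝ) • v'))) = (A - C) / 2 := by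
        simp only [map_smul, map_add, inner_smul_left, inner_smul_right, inner_add_left, inner_add_right,
          ← hA, ← hBdef, ← hC, hB']
        simp
        field_simp
        rw [sq, hs2]; ring
      rw [e, abs_div] at this
      norm_num at this
      linarith
    set p := a v' with hp
    set q := -a v with hq
    have z : p ^ 2 * A + 2 * p * q * B + q ^ 2 * C = 0 := by
      have := ha (p • v + q • v') (by simp [hp, hq]; ring)
      simp only [map_smul, map_add, inner_smul_left, inner_smul_right, inner_add_left, inner_add_right,
          ← hA, ← hBdef, ← hC, hB'] at this
      simp at this
      linarith
    by_cases hpq : p = 0 ∧ q = 0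
    · have : A = 0 := ha v (by have := hpq.2; rw [hq] at this; linarith)
      rw [this, abs_zero]
      have := abs_nonneg B
      linarith
    · have hpos : 0 < p ^ 2 + q ^ 2 := by
        rcases not_and_or.mp hpq with h | h
        · positivity
        · positivity
      have i1 : (p ^ 2 + q ^ 2) * A = - (2 * p * q * B) + q ^ 2 * (A - C) := by linarith
      have i2 : |2 * p * q * B| ≤ (p ^ 2 + q ^ 2) * κ := by
        rw [abs_mul]
        have : |2 * p * q| ≤ p ^ 2 + q ^ 2 := by
          rw [abs_le]; constructor <;> nlinarith [sq_nonneg (p + q), sq_nonneg (p - q)]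
        gcongr
      have i3 : |q ^ 2 * (A - C)| ≤ (p ^ 2 + q ^ 2) * (2 * κ) := by
        rw [abs_mul, abs_of_nonneg (sq_nonneg q)]
        gcongr
        nlinarith [sq_nonneg p]
      have i4 : (p ^ 2 + q ^ 2) * |A| ≤ (p ^ 2 + q ^ 2) * (3 * κ) := by
        rw [← abs_of_pos hpos, ← abs_mul, abs_of_pos hpos, i1]
        refine (abs_add_le _ _).trans ?_
        rw [abs_neg]; linarith
      exact le_of_mul_le_mul_left i4 hpos
  by_cases h0 : v = 0
  · simp [h0]
  have hn : 0 < ‖v‖ := norm_pos_iff.mpr h0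
  have := unit (‖v‖⁻¹ • v) (W.smul_mem _ hv) (by rw [norm_smul, norm_inv, norm_norm, inv_mul_cancel₀ hn.ne'])
  rw [map_smul, inner_smul_left, inner_smul_right] at this
  simp only [RCLike.conj_to_real] at this
  rw [← mul_assoc, abs_mul, abs_of_pos (by positivity)] at this
  have e : |inner ℝ v (S v)| = ‖v‖ ^ 2 * (‖v‖⁻¹ * ‖v‖⁻¹ * |inner ℝ v (S v)|) := by field_simp
  rw [e]
  nlinarith [sq_nonneg ‖v‖]

end abs
end MLS

namespace MLS

variable {ι : Type*} [Fintype ι] [DecidableEq ι]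

lemma AN_grid (K : Matrix ι ι ℝ) (E E' w : ℝ) (hw : 0 < w) (N : ℕ) (h : |E - E'| ≤ w / 2) :
    AN K E (w / 2) N ⊆ AN K E' w N := by
  rintro u ⟨W, hW, hv⟩
  refine ⟨W, hW, fun v hvW => ?_⟩
  have h1 := hv v hvW
  have e : ∀ i, (((Hab K u) *ᵥ v) i - E' * v i) ^ 2 ≤
      2 * (((Hab K u) *ᵥ v) i - E * v i) ^ 2 + 2 * (w / 2) ^ 2 * (v i) ^ 2 := by
    intro i
    have h2 : (E - E') ^ 2 ≤ (w / 2) ^ 2 := sq_le_sq' (by linarith [neg_abs_le (E - E')]) (by linarith [le_abs_self (E - E')])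
    have h3 : (E - E') ^ 2 * (v i) ^ 2 ≤ (w / 2) ^ 2 * (v i) ^ 2 := by gcongr
    nlinarith [sq_nonneg ((((Hab K u) *ᵥ v) i - E * v i) - (E - E') * v i)]
  calc _ ≤ ∑ i, (2 * (((Hab K u) *ᵥ v) i - E * v i) ^ 2 + 2 * (w / 2) ^ 2 * (v i) ^ 2) :=
        Finset.sum_le_sum fun i _ => e i
    _ = 2 * ∑ i, (((Hab K u) *ᵥ v) i - E * v i) ^ 2 + 2 * (w / 2) ^ 2 * ∑ i, (v i) ^ 2 := by
        rw [Finset.sum_add_distrib, Finset.mul_sum, Finset.mul_sum]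
    _ ≤ w ^ 2 * ∑ i, (v i) ^ 2 := by linarith

/-- Configurations with a cluster of at least 40 eigenvalues. -/
def BadI (K : Matrix ι ι ℝ) (ε : ℝ) : Set (ι → ℝ) :=
  {u | ∃ E : ℝ, |E| ≤ 3 / ε ∧ u ∈ AN K E (ε ^ 488 / 2) 40}

lemma AN_eps (K : Matrix ι ι ℝ) (hK : K.IsSymm) (ε : ℝ) (hε : 0 < ε) (hε1 : ε ≤ 1 / 10 ^ 6)
    (hV : (Fintype.card ι : ℝ) ≤ 1 / ε) (E : ℝ) :
    unifPi ι (AN K E (ε ^ 488) 40) ≤ ENNReal.ofReal (ε ^ 540) := by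
  have hε2 : ε ≤ 1 := hε1.trans (by norm_num)
  set V : ℝ := (Fintype.card ι : ℝ) with hVd
  have hV0 : 0 ≤ V := by positivity
  have key := AN_pow K hK E (ε ^ 488) (ε ^ 60) (4 * ε ^ 30) (by positivity) (pow_le_one₀ hε.le hε2)
    (by positivity) (pow_le_one₀ hε.le hε2) (by positivity) (by nlinarith [pow_pos hε 60]) ?_ 20
  · refine key.trans ?_
    have : ((Fintype.card ι : ENNReal) + 3 * (Fintype.card ι : ENNReal) ^ 2) = ENNReal.ofReal (V + 3 * V ^ 2) := by
      rw [ENNReal.ofReal_add hV0 (by positivity), ENNReal.ofReal_mul (by norm_num), ENNReal.ofReal_pow hV0, hVd]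
      simp
    rw [this, ← ENNReal.ofReal_mul (by positivity), ← ENNReal.ofReal_pow (by positivity)]
    apply ENNReal.ofReal_le_ofReal
    have h1 : V * ε ≤ 1 := by rwa [le_div_iff₀ hε] at hV
    have h2 : (V + 3 * V ^ 2) * (2 * (4 * ε ^ 30)) ≤ ε ^ 27 := by
      have : (V + 3 * V ^ 2) * (2 * (4 * ε ^ 30)) = 8 * ε ^ 28 * (V * ε * ε + 3 * (V * ε) ^ 2) := by ring
      rw [this]
      have h3 : V * ε * ε + 3 * (V * ε) ^ 2 ≤ 4 := by
        have a : V * ε * ε ≤ 1 * 1 := by gcongr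
        have b : (V * ε) ^ 2 ≤ 1 := pow_le_one₀ (by positivity) h1
        linarith
      calc 8 * ε ^ 28 * (V * ε * ε + 3 * (V * ε) ^ 2) ≤ 8 * ε ^ 28 * 4 := by gcongr
        _ = (32 * ε) * ε ^ 27 := by ring
        _ ≤ 1 * ε ^ 27 := by gcongr; linarith
        _ = _ := one_mul _
    calc _ ≤ (ε ^ 27) ^ 20 := by gcongr
      _ = ε ^ 540 := by rw [← pow_mul]
  · have hs : Real.sqrt (ε ^ 488) = ε ^ 244 := by
      rw [show (488 : ℕ) = 244 * 2 by norm_num, pow_mul, Real.sqrt_sq (by positivity)]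
    rw [hs]
    have e : 200 * V ^ 3 * (25 * ((ε ^ 60)⁻¹) ^ 2) ^ 2 * ε ^ 244 = 125000 * ε * (V * ε) ^ 3 := by
      field_simp; ring
    rw [e]
    have h1 : V * ε ≤ 1 := by rwa [le_div_iff₀ hε] at hV
    have b : (V * ε) ^ 3 ≤ 1 := pow_le_one₀ (by positivity) h1
    calc 125000 * ε * (V * ε) ^ 3 ≤ 125000 * (1 / 10 ^ 6) * 1 := by gcongr
      _ < 1 := by norm_num

lemma BadI_le (K : Matrix ι ι ℝ) (hK : K.IsSymm) (ε : ℝ) (hε : 0 < ε) (hε1 : ε ≤ 1 / 10 ^ 6)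
    (hV : (Fintype.card ι : ℝ) ≤ 1 / ε) :
    unifPi ι (BadI K ε) ≤ ENNReal.ofReal (ε ^ 2) := by
  have hε2 : ε ≤ 1 := hε1.trans (by norm_num)
  set w := ε ^ 488 with hw
  have hw0 : 0 < w := by positivity
  set M : ℕ := ⌈12 / (ε * w)⌉₊ + 1 with hM
  have hsub : BadI K ε ⊆ ⋃ k ∈ Finset.range M, AN K (-(3 / ε) + k * (w / 2)) w 40 := by
    rintro u ⟨E, hE, hu⟩
    obtain ⟨hE1, hE2⟩ := abs_le.mp hE
    set k := ⌊(E + 3 / ε) / (w / 2)⌋₊ with hk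
    have hpos : 0 ≤ (E + 3 / ε) / (w / 2) := div_nonneg (by linarith) (by positivity)
    have k1 := Nat.floor_le hpos
    have k2 := Nat.lt_floor_add_one ((E + 3 / ε) / (w / 2))
    rw [← hk] at k1 k2
    rw [le_div_iff₀ (by positivity)] at k1
    rw [div_lt_iff₀ (by positivity)] at k2
    simp only [Set.mem_iUnion, Finset.mem_range]
    refine ⟨k, ?_, AN_grid K E _ w hw0 40 ?_ hu⟩
    · rw [hM, Nat.lt_succ_iff]
      refine Nat.floor_le_of_le (le_trans ?_ (Nat.le_ceil _))
      rw [div_le_div_iff₀ (by positivity) (by positivity)]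
      have : E + 3 / ε ≤ 6 / ε := by have : 6 / ε = 3 / ε + 3 / ε := by ring
                                     linarith
      calc (E + 3 / ε) * (ε * w) ≤ 6 / ε * (ε * w) := by gcongr
        _ = 12 * (w / 2) := by field_simp; norm_num
    · rw [abs_le]; constructor <;> linarith
  refine (measure_mono hsub).trans ((measure_biUnion_finset_le _ _).trans ?_)
  refine (Finset.sum_le_sum fun k _ => AN_eps K hK ε hε hε1 hV _).trans ?_
  rw [Finset.sum_const, Finset.card_range, nsmul_eq_mul]
  rw [← ENNReal.ofReal_natCast, ← ENNReal.ofReal_mul (by positivity)]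
  apply ENNReal.ofReal_le_ofReal
  have hM' : (M : ℝ) ≤ 14 / (ε * w) := by
    have := (Nat.ceil_lt_add_one (a := 12 / (ε * w)) (by positivity)).le
    have h1 : 1 ≤ 1 / (ε * w) := by
      rw [le_div_iff₀ (by positivity), one_mul]
      calc ε * w ≤ 1 * 1 := by gcongr; exact pow_le_one₀ hε.le hε2
        _ = 1 := by norm_num
    rw [hM]; push_cast
    have e : 14 / (ε * w) = 12 / (ε * w) + 1 / (ε * w) + 1 / (ε * w) := by ring
    linarith
  calc (M : ℝ) * ε ^ 540 ≤ 14 / (ε * w) * ε ^ 540 := by gcongr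
    _ = (14 * ε) * (ε ^ 48 * ε ^ 2) := by rw [hw]; field_simp
    _ ≤ 1 * (1 * ε ^ 2) := by
      gcongr
      · linarith
      · exact pow_le_one₀ hε.le hε2
    _ = _ := by ring

end MLS

namespace MLS

variable {ι : Type*} [Fintype ι] [DecidableEq ι]

lemma iso_line (A : Set ℝ) (τ ε' : ℝ) (hτ : 0 < τ) (hτ1 : τ ≤ 1) (hε : 0 ≤ ε')
    (hA : ∀ s ∈ A, ∀ t ∈ A, |s - t| < τ → |s - t| ≤ ε') :
    unif A ≤ ENNReal.ofReal (3 * ε' / τ) := by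
  apply unif_le_of_volume
  set M : ℕ := ⌊4 / τ⌋₊ + 1 with hM
  have hsub : A ∩ Set.Icc (-1) 1 ⊆ ⋃ k ∈ Finset.range M, (A ∩ Set.Ico (-1 + k * (τ / 2)) (-1 + (k + 1) * (τ / 2))) := by
    rintro t ⟨htA, ht1, ht2⟩
    set k := ⌊(t + 1) / (τ / 2)⌋₊ with hk
    have hpos : 0 ≤ (t + 1) / (τ / 2) := div_nonneg (by linarith) (by positivity)
    have k1 := Nat.floor_le hpos
    have k2 := Nat.lt_floor_add_one ((t + 1) / (τ / 2))
    rw [← hk] at k1 k2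
    rw [le_div_iff₀ (by positivity)] at k1
    rw [div_lt_iff₀ (by positivity)] at k2
    simp only [Set.mem_iUnion, Finset.mem_range]
    refine ⟨k, ?_, htA, by linarith, by linarith⟩
    rw [hM, Nat.lt_succ_iff]
    refine Nat.floor_le_floor ?_
    rw [div_le_div_iff₀ (by positivity) (by positivity)]
    nlinarith
  refine (measure_mono hsub).trans ((measure_biUnion_finset_le _ _).trans ?_)
  have each : ∀ k ∈ Finset.range M, volume (A ∩ Set.Ico (-1 + (k : ℝ) * (τ / 2)) (-1 + (k + 1) * (τ / 2)))
      ≤ ENNReal.ofReal ε' := by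
    intro k _
    refine (Real.volume_le_diam _).trans ?_
    apply Metric.ediam_le
    rintro s ⟨hs, hs1, hs2⟩ t ⟨ht, ht1, ht2⟩
    rw [edist_dist, Real.dist_eq]
    apply ENNReal.ofReal_le_ofReal
    apply hA s hs t ht
    rw [abs_lt]; constructor <;> linarith
  refine (Finset.sum_le_sum each).trans ?_
  rw [Finset.sum_const, Finset.card_range, nsmul_eq_mul]
  rw [← ENNReal.ofReal_natCast, ← ENNReal.ofReal_mul (by positivity)]
  apply ENNReal.ofReal_le_ofReal
  have hM' : (M : ℝ) ≤ 6 / τ := by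
    have := Nat.floor_le (a := 4 / τ) (by positivity)
    have h1 : 1 ≤ 1 / τ := by rwa [le_div_iff₀ hτ, one_mul]
    rw [hM]; push_cast
    have e : 6 / τ = 4 / τ + 1 / τ + 1 / τ := by ring
    linarith
  calc (M : ℝ) * ε' ≤ 6 / τ * ε' := by gcongr
    _ = _ := by ring

lemma iso_measure (x : ι) (S : Set (ι → ℝ)) (ς τ ε' : ℝ) (hς : 0 < ς) (hτ : 0 < τ) (hτ1 : τ ≤ 1) (hε : 0 ≤ ε')
    (hS : ∀ u ∈ S, ∀ u₀ ∈ S, (∀ z, z ≠ x → |u z - u₀ z| ≤ ς) → |u x - u₀ x| ≤ τ → |u x - u₀ x| ≤ ε') :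
    unifPi ι S ≤ ENNReal.ofReal (3 * ε' / τ) := by
  refine (measure_mono (subset_closure (s := S))).trans ?_
  rw [slice_eq x _ isClosed_closure.measurableSet]
  have : ∀ u : ι → ℝ, unif {t | Function.update u x t ∈ closure S} ≤ ENNReal.ofReal (3 * ε' / τ) := by
    intro u
    apply iso_line _ τ ε' hτ hτ1 hε
    intro s hs t ht hst
    rw [Set.mem_ofPred_eq] at hs ht
    refine le_of_forall_pos_le_add fun η hη => ?_
    set η' := min (min (ς / 2) ((τ - |s - t|) / 2)) (η / 2) with hη'
    have hη0 : 0 < η' := by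
      refine lt_min (lt_min (by positivity) ?_) (by positivity)
      linarith
    have b1 : η' ≤ ς / 2 := (min_le_left _ _).trans (min_le_left _ _)
    have b2 : η' ≤ (τ - |s - t|) / 2 := (min_le_left _ _).trans (min_le_right _ _)
    have b3 : η' ≤ η / 2 := min_le_right _ _
    obtain ⟨p, hp, dp⟩ := Metric.mem_closure_iff.mp hs η' hη0
    obtain ⟨q, hq, dq⟩ := Metric.mem_closure_iff.mp ht η' hη0
    have cp : ∀ z, |Function.update u x s z - p z| ≤ η' := fun z => by
      have := dist_le_pi_dist (Function.update u x s) p z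
      rw [Real.dist_eq] at this; linarith
    have cq : ∀ z, |Function.update u x t z - q z| ≤ η' := fun z => by
      have := dist_le_pi_dist (Function.update u x t) q z
      rw [Real.dist_eq] at this; linarith
    have hx1 := cp x
    have hx2 := cq x
    rw [Function.update_self] at hx1 hx2
    have h2 : |p x - q x| ≤ |s - t| + 2 * η' ∧ |s - t| ≤ |p x - q x| + 2 * η' := by
      constructor
      · have : p x - q x = (s - t) - (s - p x) + (t - q x) := by ring
        rw [this]
        refine (abs_add_le _ _).trans ?_
        have := abs_sub (s - t) (s - p x)
        linarith
      · have : s - t = (p x - q x) + (s - p x) - (t - q x) := by ring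
        rw [this]
        refine (abs_sub _ _).trans ?_
        have := abs_add_le (p x - q x) (s - p x)
        linarith
    have := hS p hp q hq (fun z hz => ?_) (by linarith [h2.1])
    · linarith [h2.2]
    · have c1 := cp z
      have c2 := cq z
      rw [Function.update_of_ne hz] at c1 c2
      have : p z - q z = (u z - q z) - (u z - p z) := by ring
      rw [this]
      refine (abs_sub _ _).trans (by linarith)
  refine (lintegral_mono this).trans ?_
  rw [lintegral_const, measure_univ, mul_one]

end MLS

namespace MLS

variable {ι : Type*} [Fintype ι] [DecidableEq ι]

/-- The Hamiltonian as an operator. -/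
noncomputable def Top (K : Matrix ι ι ℝ) (u : ι → ℝ) : EuclideanSpace ℝ (ι × Bool) →ₗ[ℝ] EuclideanSpace ℝ (ι × Bool) :=
  Matrix.toEuclideanLin (Hab K u)

/-- The flip at site `x` as an operator. -/
noncomputable def So (x : ι) : EuclideanSpace ℝ (ι × Bool) →ₗ[ℝ] EuclideanSpace ℝ (ι × Bool) :=
  Matrix.toEuclideanLin (sg x)

lemma Top_apply (K : Matrix ι ι ℝ) (u : ι → ℝ) (v : EuclideanSpace ℝ (ι × Bool)) (z : ι) (b : Bool) :
    Top K u v (z, b) = ∑ y, K z y * v (y, b) + (if b then -1 else 1) * v (z, b) + u z * v (z, !b) := by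
  have : Top K u v (z, b) = ∑ j, Hab K u (z, b) j * v j := rfl
  rw [this, Fintype.sum_prod_type]
  have h : ∀ y, ∑ c, Hab K u (z, b) (y, c) * v (y, c) = K z y * v (y, b) +
      (if z = y then (if b then -1 else 1) * v (z, b) + u z * v (z, !b) else 0) := by
    intro y
    rw [Fintype.sum_bool]
    by_cases hz : z = y
    · subst hz
      cases b <;> simp [Hab] <;> ring
    · cases b <;> simp [Hab, hz]
  rw [Finset.sum_congr rfl fun y _ => h y, Finset.sum_add_distrib]
  simp [add_assoc]

lemma So_apply (x : ι) (v : EuclideanSpace ℝ (ι × Bool)) (z : ι) (b : Bool) :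
    So x v (z, b) = if z = x then v (x, !b) else 0 := by
  have : So x v (z, b) = ∑ j, sg x (z, b) j * v j := rfl
  rw [this, Fintype.sum_prod_type]
  have h : ∀ y, ∑ c, sg x (z, b) (y, c) * v (y, c) = if y = x then (if z = x then v (x, !b) else 0) else 0 := by
    intro y
    rw [Fintype.sum_bool]
    by_cases hz : z = x
    · by_cases hy : y = x
      · subst hz hy
        cases b <;> simp [sg]
      · cases b <;> simp [sg, hy]
    · cases b <;> simp [sg, hz]
  rw [Finset.sum_congr rfl fun y _ => h y]
  simp

lemma Top_symm (K : Matrix ι ι ℝ) (hK : K.IsSymm) (u : ι → ℝ) : (Top K u).IsSymmetric := by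
  unfold Top
  rw [Matrix.isSymmetric_toEuclideanLin_iff]
  rw [Matrix.IsHermitian, Matrix.conjTranspose_eq_transpose_of_trivial]
  exact Hab_symm K hK u

lemma So_symm (x : ι) : (So x).IsSymmetric := by
  unfold So
  rw [Matrix.isSymmetric_toEuclideanLin_iff]
  ext ⟨y, a⟩ ⟨z, b⟩
  simp [sg]
  grind

lemma inner_pair (v w : EuclideanSpace ℝ (ι × Bool)) :
    inner ℝ v w = ∑ z, (v (z, true) * w (z, true) + v (z, false) * w (z, false)) := by
  rw [PiLp.inner_apply, Fintype.sum_prod_type]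
  refine Finset.sum_congr rfl fun z _ => ?_
  rw [Fintype.sum_bool]
  simp [mul_comm]

lemma norm_pair (v : EuclideanSpace ℝ (ι × Bool)) :
    ‖v‖ ^ 2 = ∑ z, (v (z, true) ^ 2 + v (z, false) ^ 2) := by
  rw [← real_inner_self_eq_norm_sq, inner_pair]
  simp [sq]

lemma So_norm (x : ι) (v : EuclideanSpace ℝ (ι × Bool)) : ‖So x v‖ ≤ ‖v‖ := by
  rw [← sq_le_sq₀ (norm_nonneg _) (norm_nonneg _), norm_pair, norm_pair]
  refine Finset.sum_le_sum fun z _ => ?_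
  rw [So_apply, So_apply]
  by_cases h : z = x
  · subst h; simp [add_comm]
  · simp [h]; positivity

lemma So_form (x : ι) (v : EuclideanSpace ℝ (ι × Bool)) :
    inner ℝ v (So x v) = 2 * (v (x, false) * v (x, true)) := by
  rw [inner_pair]
  simp only [So_apply]
  rw [Finset.sum_eq_single x]
  · simp; ring
  · intro z _ hz; simp [hz]
  · simp

/-- The coordinate functional at `(x,false)`. -/
def co (x : ι) : EuclideanSpace ℝ (ι × Bool) →ₗ[ℝ] ℝ where
  toFun v := v (x, false)
  map_add' _ _ := rfl
  map_smul' _ _ := rfl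

lemma co_form (x : ι) (v : EuclideanSpace ℝ (ι × Bool)) (h : co x v = 0) : inner ℝ v (So x v) = 0 := by
  have : v (x, false) = 0 := h
  rw [So_form, this]; ring

lemma Top_diff (K : Matrix ι ι ℝ) (u u' : ι → ℝ) (v : EuclideanSpace ℝ (ι × Bool)) :
    Top K u' v = Top K u v + ∑ z, (u' z - u z) • So z v := by
  ext ⟨z, b⟩
  simp only [PiLp.add_apply, Top_apply, WithLp.ofLp_sum, Finset.sum_apply, PiLp.smul_apply, So_apply, smul_eq_mul]
  simp
  ring

lemma sumSo_apply (v : EuclideanSpace ℝ (ι × Bool)) (z : ι) (b : Bool) : (∑ x, So x v) (z, b) = v (z, !b) := by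
  simp [WithLp.ofLp_sum, Finset.sum_apply, So_apply]

lemma sumSo_norm (v : EuclideanSpace ℝ (ι × Bool)) : ‖∑ x, So x v‖ = ‖v‖ := by
  rw [← sq_eq_sq₀ (norm_nonneg _) (norm_nonneg _), norm_pair, norm_pair]
  refine Finset.sum_congr rfl fun z _ => ?_
  rw [sumSo_apply, sumSo_apply]; simp [add_comm]

/-- Polarization. -/
lemma polar {E : Type*} [NormedAddCommGroup E] [InnerProductSpace ℝ E] (S : E →ₗ[ℝ] E) (hS : S.IsSymmetric)
    (W : Submodule ℝ E) (κ : ℝ) (hκ : 0 ≤ κ) (h : ∀ v ∈ W, |inner ℝ v (S v)| ≤ κ * ‖v‖ ^ 2) (v w : E) (hv : v ∈ W)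
    (hw : w ∈ W) (nv : ‖v‖ ≤ 1) (nw : ‖w‖ ≤ 1) : |inner ℝ v (S w)| ≤ κ := by
  have h1 := h (v + w) (W.add_mem hv hw)
  have h2 := h (v - w) (W.sub_mem hv hw)
  have e : inner ℝ v (S w) = (inner ℝ (v + w) (S (v + w)) - inner ℝ (v - w) (S (v - w))) / 4 := by
    simp only [map_add, map_sub, inner_add_left, inner_add_right, inner_sub_left, inner_sub_right]
    have : inner ℝ w (S v) = inner ℝ v (S w) := by rw [← hS, real_inner_comm]
    rw [this]; ring
  have p := parallelogram_law_with_norm ℝ v w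
  have q1 : ‖v‖ * ‖v‖ ≤ 1 := by nlinarith [norm_nonneg v]
  have q2 : ‖w‖ * ‖w‖ ≤ 1 := by nlinarith [norm_nonneg w]
  have h3 : κ * ‖v + w‖ ^ 2 + κ * ‖v - w‖ ^ 2 ≤ 4 * κ := by
    have : κ * ‖v + w‖ ^ 2 + κ * ‖v - w‖ ^ 2 = κ * (‖v + w‖ ^ 2 + ‖v - w‖ ^ 2) := by ring
    rw [this, p]
    nlinarith
  rw [e, abs_le]
  rw [abs_le] at h1 h2
  constructor <;> linarith

/-- The commutator vector at `x`. -/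
noncomputable def kx (x : ι) (v : EuclideanSpace ℝ (ι × Bool)) : EuclideanSpace ℝ (ι × Bool) :=
  WithLp.toLp 2 fun s => if s.1 = x then (if s.2 then -2 else 2) * v (x, !s.2) else 0

lemma kx_apply (x : ι) (v : EuclideanSpace ℝ (ι × Bool)) (z : ι) (b : Bool) :
    kx x v (z, b) = if z = x then (if b then -2 else 2) * v (x, !b) else 0 := rfl

lemma kx_sum (K : Matrix ι ι ℝ) (u : ι → ℝ) (e : ℝ) (v : EuclideanSpace ℝ (ι × Bool)) :
    Top K u (∑ x, So x v) - e • (∑ x, So x v) = (∑ x, So x (Top K u v - e • v)) + ∑ x, kx x v := by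
  ext ⟨z, b⟩
  have h1 : (Top K u (∑ x, So x v) - e • (∑ x, So x v)) (z, b) =
      Top K u (∑ x, So x v) (z, b) - e * (∑ x, So x v) (z, b) := rfl
  have h2 : ((∑ x, So x (Top K u v - e • v)) + ∑ x, kx x v) (z, b) =
      (∑ x, So x (Top K u v - e • v)) (z, b) + (∑ x, kx x v) (z, b) := rfl
  have h3 : (Top K u v - e • v) (z, !b) = Top K u v (z, !b) - e * v (z, !b) := rfl
  have h4 : (∑ x, kx x v) (z, b) = (if b then -2 else 2) * v (z, !b) := by
    simp [WithLp.ofLp_sum, Finset.sum_apply, kx_apply]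
  have h5 : ∀ y, (∑ x, So x v) (y, b) = v (y, !b) := fun y => sumSo_apply v y b
  rw [h1, h2, sumSo_apply v, sumSo_apply (Top K u v - e • v), h3, h4, Top_apply, Top_apply, sumSo_apply, sumSo_apply]
  simp only [h5]
  cases b <;> simp <;> ring

lemma kx_err (x : ι) (v : EuclideanSpace ℝ (ι × Bool)) (κ : ℝ) (hκ : 0 ≤ κ)
    (h : |inner ℝ v (So x v)| ≤ 3 * κ) :
    ∃ c : ℝ, |c| ≤ 2 ∧ ‖kx x v - c • So x v‖ ≤ 5 * Real.sqrt κ := by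
  rw [So_form] at h
  have hs := Real.mul_self_sqrt hκ
  have hs0 := Real.sqrt_nonneg κ
  by_cases ha : |v (x, false)| ≤ 5 / 4 * Real.sqrt κ
  · refine ⟨2, by norm_num, ?_⟩
    have : kx x v - (2 : ℝ) • So x v = EuclideanSpace.single (x, true) (-4 * v (x, false)) := by
      ext ⟨z, b⟩
      simp only [PiLp.sub_apply, PiLp.smul_apply, kx_apply, So_apply, smul_eq_mul, PiLp.single_apply]
      by_cases hz : z = x
      · cases b <;> simp [hz]
        ring
      · simp [hz]
    rw [this, PiLp.norm_single, Real.norm_eq_abs, abs_mul]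
    norm_num
    linarith
  · refine ⟨-2, by norm_num, ?_⟩
    push Not at ha
    have hb : |v (x, true)| ≤ 5 / 4 * Real.sqrt κ := by
      by_contra hb
      push Not at hb
      rw [abs_mul, abs_mul] at h
      norm_num at h
      have h1 : (5 / 4 * Real.sqrt κ) * (5 / 4 * Real.sqrt κ) ≤ (5 / 4 * Real.sqrt κ) * |v (x, true)| := by
        gcongr
      have h2 : (5 / 4 * Real.sqrt κ) * |v (x, true)| < |v (x, false)| * |v (x, true)| := by
        have : 0 < |v (x, true)| := lt_of_le_of_lt (by positivity) hb
        gcongr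
      nlinarith
    have : kx x v - (-2 : ℝ) • So x v = EuclideanSpace.single (x, false) (4 * v (x, true)) := by
      ext ⟨z, b⟩
      simp only [PiLp.sub_apply, PiLp.smul_apply, kx_apply, So_apply, smul_eq_mul, PiLp.single_apply]
      by_cases hz : z = x
      · cases b <;> simp [hz]
        ring
      · simp [hz]
    rw [this, PiLp.norm_single, Real.norm_eq_abs, abs_mul]
    norm_num
    linarith

/-- The structural lemma: if all quadratic forms are small then some second order quantity is large. -/
lemma structural (K : Matrix ι ι ℝ) (u : ι → ℝ) (e ρ r κ₁ κ₂ : ℝ) 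
    (W : Submodule ℝ (EuclideanSpace ℝ (ι × Bool))) (R : EuclideanSpace ℝ (ι × Bool) →ₗ[ℝ] EuclideanSpace ℝ (ι × Bool))
    (h : Clus (Top K u) e W R ρ r) (hr : 0 < r) (hκ₁ : 0 ≤ κ₁) (hκ₂ : 0 ≤ κ₂)
    (hq : ∀ x, ∀ v ∈ W, |inner ℝ v (So x v)| ≤ 3 * κ₁ * ‖v‖ ^ 2)
    (hsm : 3 * (Fintype.card ι : ℝ) * κ₁ + ρ / r + 2 * (Fintype.card ι : ℝ) ^ 2 * κ₂
      + 5 * (Fintype.card ι : ℝ) * Real.sqrt κ₁ / r < 1)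
    (ψ : EuclideanSpace ℝ (ι × Bool)) (hψ : ψ ∈ W) (n1 : ‖ψ‖ = 1) :
    ∃ x y, κ₂ ≤ |inner ℝ (So x ψ) (R (So y ψ))| := by
  by_contra hcon
  push Not at hcon
  set φ := ∑ x, So x ψ with hφ
  have nφ : ‖φ‖ = 1 := by rw [hφ, sumSo_norm, n1]
  set V : ℝ := (Fintype.card ι : ℝ) with hV
  -- projection
  have hP : ‖W.starProjection φ‖ ^ 2 ≤ 3 * V * κ₁ := by
    have hPm : W.starProjection φ ∈ W := W.starProjection_apply_mem φ
    have nP : ‖W.starProjection φ‖ ≤ 1 := nφ ▸ W.norm_starProjection_apply_le φ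
    have e1 : ‖W.starProjection φ‖ ^ 2 = inner ℝ (W.starProjection φ) φ := by
      have := W.starProjection_inner_eq_zero φ _ hPm
      rw [inner_sub_left, real_inner_self_eq_norm_sq, real_inner_comm] at this
      linarith
    rw [e1]
    conv_lhs => rw [hφ]
    rw [inner_sum]
    calc ∑ x, inner ℝ (W.starProjection φ) (So x ψ) ≤ ∑ _x : ι, 3 * κ₁ := by
          refine Finset.sum_le_sum fun x _ => (le_abs_self _).trans ?_
          exact polar (So x) (So_symm x) W (3 * κ₁) (by positivity) (hq x) _ _ hPm hψ nP n1.le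
      _ = 3 * V * κ₁ := by rw [Finset.sum_const, Finset.card_univ, nsmul_eq_mul]; ring
  have m1 : inner ℝ φ (R (Top K u φ - e • φ)) = 1 - ‖W.starProjection φ‖ ^ 2 := by
    have hPm : W.starProjection φ ∈ W := W.starProjection_apply_mem φ
    have := W.starProjection_inner_eq_zero φ _ hPm
    rw [inner_sub_left, real_inner_self_eq_norm_sq] at this
    rw [h.inv, inner_sub_right, real_inner_self_eq_norm_sq, nφ]
    linarith
  rw [hφ, kx_sum, map_add, inner_add_right, ← hφ, map_sum R (fun x => kx x ψ), inner_sum] at m1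
  have b1 : inner ℝ φ (R (∑ x, So x (Top K u ψ - e • ψ))) ≤ ρ / r := by
    refine (real_inner_le_norm _ _).trans ?_
    rw [nφ, one_mul]
    refine (h.bd _).trans ?_
    rw [sumSo_norm]
    gcongr
    simpa [n1] using h.close ψ hψ
  have b2 : ∀ x, inner ℝ φ (R (kx x ψ)) ≤ 2 * V * κ₂ + 5 * Real.sqrt κ₁ / r := by
    intro x
    obtain ⟨c, hc, he⟩ := kx_err x ψ κ₁ hκ₁ (by simpa [n1] using hq x ψ hψ)
    have e1 : kx x ψ = c • So x ψ + (kx x ψ - c • So x ψ) := by abel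
    rw [e1, map_add, inner_add_right, map_smul, inner_smul_right]
    refine add_le_add ?_ ?_
    · refine (le_abs_self _).trans ?_
      rw [abs_mul]
      have : |inner ℝ φ (R (So x ψ))| ≤ V * κ₂ := by
        rw [hφ, sum_inner]
        refine (Finset.abs_sum_le_sum_abs _ _).trans ?_
        calc _ ≤ ∑ _y : ι, κ₂ := Finset.sum_le_sum fun y _ => (hcon y x).le
          _ = V * κ₂ := by rw [Finset.sum_const, Finset.card_univ, nsmul_eq_mul]
      calc |c| * |inner ℝ φ (R (So x ψ))| ≤ 2 * (V * κ₂) := by gcongr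
        _ = _ := by ring
    · refine (real_inner_le_norm _ _).trans ?_
      rw [nφ, one_mul]
      refine (h.bd _).trans ?_
      gcongr
  have b3 : ∑ x, inner ℝ φ (R (kx x ψ)) ≤ V * (2 * V * κ₂ + 5 * Real.sqrt κ₁ / r) := by
    refine (Finset.sum_le_sum fun x _ => b2 x).trans ?_
    rw [Finset.sum_const, Finset.card_univ, nsmul_eq_mul]
  have e2 : V * (2 * V * κ₂ + 5 * Real.sqrt κ₁ / r) = 2 * V ^ 2 * κ₂ + 5 * V * Real.sqrt κ₁ / r := by ring
  linarith

end MLS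

namespace MLS

section spec
variable {E : Type*} [NormedAddCommGroup E] [InnerProductSpace ℝ E] [FiniteDimensional ℝ E]
variable {n : Type*} [Fintype n] [DecidableEq n]

lemma onb_norm (b : OrthonormalBasis n ℝ E) (v : E) : ‖v‖ ^ 2 = ∑ i, (inner ℝ (b i) v) ^ 2 := by
  rw [← b.sum_sq_norm_inner_right v]
  simp

lemma onb_ext (b : OrthonormalBasis n ℝ E) (v w : E) (h : ∀ i, inner ℝ (b i) v = inner ℝ (b i) w) : v = w := by
  apply b.repr.injective
  ext i
  rw [b.repr_apply_apply, b.repr_apply_apply, h]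

lemma onb_coef (b : OrthonormalBasis n ℝ E) (c : n → ℝ) (i : n) : inner ℝ (b i) (∑ j, c j • b j) = c i := by
  rw [inner_sum, Finset.sum_eq_single i]
  · rw [inner_smul_right, b.inner_eq_one, mul_one]
  · intro j _ hj
    rw [inner_smul_right, b.inner_eq_zero hj.symm, mul_zero]
  · simp

lemma onb_T (b : OrthonormalBasis n ℝ E) (T : E →ₗ[ℝ] E) (lam : n → ℝ) (hT : ∀ i, T (b i) = lam i • b i)
    (v : E) (i : n) : inner ℝ (b i) (T v) = lam i * inner ℝ (b i) v := by
  have hv : v = ∑ j, (inner ℝ (b j) v) • b j := (b.sum_repr' v).symm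
  have : T v = ∑ j, (inner ℝ (b j) v * lam j) • b j := by
    conv_lhs => rw [hv]
    rw [map_sum]
    refine Finset.sum_congr rfl fun j _ => ?_
    rw [map_smul, hT, smul_smul]
  rw [this, onb_coef, mul_comm]

/-- The spectral subspace. -/
def Wsp (b : OrthonormalBasis n ℝ E) (I : Finset n) : Submodule ℝ E := Submodule.span ℝ (Set.range fun i : I => b i)

lemma Wsp_finrank (b : OrthonormalBasis n ℝ E) (I : Finset n) : Module.finrank ℝ (Wsp b I) = I.card := by
  unfold Wsp
  rw [finrank_span_eq_card]
  · simp
  · exact (b.orthonormal.comp _ Subtype.val_injective).linearIndependent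

lemma Wsp_coef (b : OrthonormalBasis n ℝ E) (I : Finset n) (v : E) (hv : v ∈ Wsp b I) (i : n) (hi : i ∉ I) :
    inner ℝ (b i) v = 0 := by
  unfold Wsp at hv
  induction hv using Submodule.span_induction with
  | mem x h =>
    obtain ⟨j, rfl⟩ := h
    apply b.inner_eq_zero
    rintro rfl
    exact hi j.2
  | zero => simp
  | add x y _ _ hx hy => rw [inner_add_right, hx, hy, add_zero]
  | smul a x _ hx => rw [inner_smul_right, hx, mul_zero]

lemma Wsp_mem (b : OrthonormalBasis n ℝ E) (I : Finset n) (i : n) (hi : i ∈ I) : b i ∈ Wsp b I :=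
  Submodule.subset_span ⟨⟨i, hi⟩, rfl⟩

lemma Wsp_close (b : OrthonormalBasis n ℝ E) (T : E →ₗ[ℝ] E) (lam : n → ℝ) (hT : ∀ i, T (b i) = lam i • b i)
    (e ρ : ℝ) (hρ : 0 ≤ ρ) (I : Finset n) (hI : ∀ i ∈ I, |lam i - e| ≤ ρ) (v : E) (hv : v ∈ Wsp b I) :
    ‖T v - e • v‖ ≤ ρ * ‖v‖ := by
  rw [← sq_le_sq₀ (norm_nonneg _) (by positivity), mul_pow, onb_norm b, onb_norm b, Finset.mul_sum]
  refine Finset.sum_le_sum fun i _ => ?_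
  rw [inner_sub_right, inner_smul_right, onb_T b T lam hT, ← sub_mul, mul_pow]
  by_cases hi : i ∈ I
  · have : (lam i - e) ^ 2 ≤ ρ ^ 2 := by
      rw [← sq_abs]
      have := hI i hi
      gcongr
    gcongr
  · rw [Wsp_coef b I v hv i hi]; simp

lemma clus_exists (b : OrthonormalBasis n ℝ E) (T : E →ₗ[ℝ] E) (lam : n → ℝ) (hT : ∀ i, T (b i) = lam i • b i)
    (e ρ r : ℝ) (hρ : 0 ≤ ρ) (hr : 0 < r) (I : Finset n) (hI : ∀ i ∈ I, |lam i - e| ≤ ρ)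
    (hI' : ∀ i, i ∉ I → r ≤ |lam i - e|) : ∃ R, Clus T e (Wsp b I) R ρ r := by
  let c : n → ℝ := fun i => if i ∈ I then 0 else (lam i - e)⁻¹
  let R : E →ₗ[ℝ] E := ∑ i, c i • ((innerₛₗ ℝ (b i) : E →ₗ[ℝ] ℝ).smulRight (b i))
  have hR : ∀ v i, inner ℝ (b i) (R v) = c i * inner ℝ (b i) v := by
    intro v i
    have : R v = ∑ j, (c j * inner ℝ (b j) v) • b j := by
      simp only [R, LinearMap.sum_apply, LinearMap.smul_apply, LinearMap.smulRight_apply, smul_smul]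
      rfl
    rw [this, onb_coef]
  refine ⟨R, Wsp_close b T lam hT e ρ hρ I hI, ?_, ?_, ?_⟩
  · intro v
    have hP : (Wsp b I).starProjection v = ∑ j, (if j ∈ I then inner ℝ (b j) v else 0) • b j := by
      apply Submodule.eq_starProjection_of_mem_orthogonal
      · refine Submodule.sum_mem _ fun j _ => ?_
        by_cases hj : j ∈ I
        · exact Submodule.smul_mem _ _ (Wsp_mem b I j hj)
        · simp [hj]
      · rw [Submodule.mem_orthogonal]
        intro w hw
        rw [← b.sum_repr' w, sum_inner]
        refine Finset.sum_eq_zero fun i _ => ?_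
        rw [real_inner_smul_left, inner_sub_right, onb_coef]
        by_cases hi : i ∈ I
        · simp [hi]
        · rw [Wsp_coef b I w hw i hi, zero_mul]
    apply onb_ext b
    intro i
    rw [hR, inner_sub_right, inner_sub_right, inner_smul_right, onb_T b T lam hT, hP, onb_coef]
    by_cases hi : i ∈ I
    · simp [c, hi]
    · have : lam i - e ≠ 0 := by
        have := hI' i hi
        intro h
        rw [h, abs_zero] at this
        linarith
      simp only [c, hi, if_false, sub_zero]
      field_simp
  · intro v
    rw [← sq_le_sq₀ (norm_nonneg _) (by positivity), div_pow, onb_norm b, onb_norm b, Finset.sum_div]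
    refine Finset.sum_le_sum fun i _ => ?_
    rw [hR, mul_pow, div_eq_inv_mul]
    have hc : c i ^ 2 ≤ (r ^ 2)⁻¹ := by
      by_cases hi : i ∈ I
      · simp only [c, hi, if_true]
        rw [zero_pow two_ne_zero]
        positivity
      · simp only [c, hi, if_false]
        rw [inv_pow, ← sq_abs (lam i - e)]
        have := hI' i hi
        apply inv_anti₀ (by positivity)
        exact pow_le_pow_left₀ hr.le this 2
    gcongr
  · intro v hv
    apply onb_ext b
    intro i
    rw [hR, inner_zero_right]
    by_cases hi : i ∈ I
    · simp [c, hi]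
    · rw [Wsp_coef b I v hv i hi, mul_zero]

end spec

variable {ι : Type*} [Fintype ι] [DecidableEq ι]

lemma eig_bound (K : Matrix ι ι ℝ) (hK1 : ∀ x y, |K x y| ≤ 1) (u : ι → ℝ) (hu : ∀ x, |u x| ≤ 1)
    (lam : ℝ) (v : EuclideanSpace ℝ (ι × Bool)) (hv : v ≠ 0) (h : Top K u v = lam • v) :
    |lam| ≤ 3 * (Fintype.card ι : ℝ) := by
  have hne : Nonempty (ι × Bool) := by
    by_contra hn
    rw [not_nonempty_iff] at hn
    exact hv (Subsingleton.elim _ _)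
  obtain ⟨⟨z, b⟩, hz⟩ := Finite.exists_max fun i => |v i|
  have hpos : 0 < |v (z, b)| := by
    by_contra hn
    push Not at hn
    apply hv
    ext i
    have := (hz i).trans hn
    simpa using this
  have hV : (1 : ℝ) ≤ Fintype.card ι := by
    have : 0 < Fintype.card ι := Fintype.card_pos_iff.mpr ⟨z⟩
    exact_mod_cast this
  have e1 : lam * v (z, b) = ∑ y, K z y * v (y, b) + (if b then -1 else 1) * v (z, b) + u z * v (z, !b) := by
    rw [← Top_apply, h]; rfl
  have b1 : |∑ y, K z y * v (y, b)| ≤ Fintype.card ι * |v (z, b)| := by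
    refine (Finset.abs_sum_le_sum_abs _ _).trans ?_
    calc _ ≤ ∑ _y : ι, |v (z, b)| := by
          refine Finset.sum_le_sum fun y _ => ?_
          rw [abs_mul]
          calc |K z y| * |v (y, b)| ≤ 1 * |v (z, b)| := by
                exact mul_le_mul (hK1 z y) (hz (y, b)) (abs_nonneg _) zero_le_one
            _ = _ := one_mul _
      _ = _ := by rw [Finset.sum_const, Finset.card_univ, nsmul_eq_mul]
  have b2 : |(if b then -1 else 1) * v (z, b)| = |v (z, b)| := by cases b <;> simp
  have b3 : |u z * v (z, !b)| ≤ |v (z, b)| := by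
    rw [abs_mul]
    calc |u z| * |v (z, !b)| ≤ 1 * |v (z, b)| := by
          exact mul_le_mul (hu z) (hz (z, !b)) (abs_nonneg _) zero_le_one
      _ = _ := one_mul _
  have b4 : |lam| * |v (z, b)| ≤ (3 * Fintype.card ι) * |v (z, b)| := by
    rw [← abs_mul, e1]
    have i1 := abs_add_le (∑ y, K z y * v (y, b) + (if b then -1 else 1) * v (z, b)) (u z * v (z, !b))
    have i2 := abs_add_le (∑ y, K z y * v (y, b)) ((if b then -1 else 1) * v (z, b))
    nlinarith
  exact le_of_mul_le_mul_right b4 hpos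

lemma AN_of_clus (K : Matrix ι ι ℝ) (u : ι → ℝ) (e w : ℝ) (N : ℕ) (hw : 0 ≤ w)
    (W : Submodule ℝ (EuclideanSpace ℝ (ι × Bool))) (hN : N ≤ Module.finrank ℝ W)
    (h : ∀ v ∈ W, ‖Top K u v - e • v‖ ≤ w * ‖v‖) : u ∈ AN K e w N := by
  refine ⟨W.map (WithLp.linearEquiv 2 ℝ (ι × Bool → ℝ)).toLinearMap, ?_, ?_⟩
  · rwa [LinearEquiv.finrank_map_eq]
  · rintro _ ⟨v, hv, rfl⟩
    have h1 := h v hv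
    rw [← sq_le_sq₀ (norm_nonneg _) (by positivity), mul_pow, EuclideanSpace.norm_sq_eq,
      EuclideanSpace.norm_sq_eq] at h1
    simp only [Real.norm_eq_abs, sq_abs] at h1
    exact h1

lemma pigeon (f : ℕ → ℕ) (hf : ∀ j, f j ≤ f (j + 1)) (h0 : 2 ≤ f 0) (h38 : f 38 < 40) : ∃ j < 38, f j = f (j + 1) := by
  by_contra h
  push Not at h
  have : ∀ j ≤ 38, 2 + j ≤ f j := by
    intro j
    induction j with
    | zero => intro _; simpa using h0
    | succ k ih =>
      intro hk
      have h1 := ih (by omega)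
      have h2 := h k (by omega)
      have h3 := hf k
      omega
  have := this 38 le_rfl
  omega

/-- Existence of an isolated cluster outside the bad event. -/
lemma cluster (K : Matrix ι ι ℝ) (hK1 : ∀ x y, |K x y| ≤ 1) (ε : ℝ) (hε : 0 < ε) (hε1 : ε ≤ 1 / 10 ^ 6)
    (hV : (Fintype.card ι : ℝ) ≤ 1 / ε) (u : ι → ℝ) (hu : ∀ x, |u x| ≤ 1) (hB : u ∉ BadI K ε)
    {n : Type*} [Fintype n] [DecidableEq n]
    (b : OrthonormalBasis n ℝ (EuclideanSpace ℝ (ι × Bool))) (lam : n → ℝ) (hT : ∀ i, Top K u (b i) = lam i • b i)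
    (α β : n) (hαβ : α ≠ β) (hδ : |lam α - lam β| ≤ ε ^ (500 * 12 ^ 38)) :
    ∃ i < 38, ∃ (e : ℝ) (W : Submodule ℝ (EuclideanSpace ℝ (ι × Bool)))
      (R : EuclideanSpace ℝ (ι × Bool) →ₗ[ℝ] EuclideanSpace ℝ (ι × Bool)), |e| ≤ 3 / ε ∧ 2 ≤ Module.finrank ℝ W ∧ Module.finrank ℝ W < 40 ∧
      Clus (Top K u) e W R (ε ^ (500 * 12 ^ (i + 1))) (ε ^ (500 * 12 ^ i)) := by
  have hε2 : ε ≤ 1 := hε1.trans (by norm_num)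
  set e := lam α with he
  have hebd : |e| ≤ 3 / ε := by
    have h1 := eig_bound K hK1 u hu e (b α) (b.orthonormal.ne_zero α) (hT α)
    have : 3 / ε = 3 * (1 / ε) := by ring
    rw [this]
    linarith
  set I : ℕ → Finset n := fun i => Finset.univ.filter fun k => |lam k - e| ≤ ε ^ (500 * 12 ^ i) with hI
  have hmem : ∀ i k, k ∈ I i ↔ |lam k - e| ≤ ε ^ (500 * 12 ^ i) := fun i k => by simp [hI]
  have hmono : ∀ i, I (i + 1) ⊆ I i := by
    intro i k hk
    rw [hmem] at hk ⊢
    refine hk.trans (pow_le_pow_of_le_one hε.le hε2 ?_)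
    gcongr
    · norm_num
    · omega
  have h38 : 2 ≤ (I 38).card := by
    have : ({α, β} : Finset n) ⊆ I 38 := by
      intro k hk
      rw [hmem]
      rcases Finset.mem_insert.mp hk with rfl | hk
      · rw [he, sub_self, abs_zero]; positivity
      · rw [Finset.mem_singleton.mp hk, abs_sub_comm]; exact hδ
    rw [← Finset.card_pair hαβ]
    exact Finset.card_le_card this
  have h0 : (I 0).card < 40 := by
    by_contra hcon
    push Not at hcon
    apply hB
    refine ⟨e, hebd, AN_of_clus K u e _ 40 (by positivity) (Wsp b (I 0)) (by rwa [Wsp_finrank]) ?_⟩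
    refine Wsp_close b _ lam hT e _ (by positivity) (I 0) fun k hk => ?_
    rw [hmem] at hk
    refine hk.trans ?_
    rw [pow_zero, mul_one, show (500 : ℕ) = 11 + 1 + 488 by norm_num, pow_add, pow_add]
    have h1 : ε ^ 11 ≤ 1 := pow_le_one₀ hε.le hε2
    have h2 : ε ^ 11 * ε ^ 1 ≤ 1 / 2 := by
      rw [pow_one]
      calc ε ^ 11 * ε ≤ 1 * (1 / 2) := by gcongr; linarith
        _ = _ := one_mul _
    calc _ ≤ 1 / 2 * ε ^ 488 := by gcongr
      _ = _ := by ring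
  obtain ⟨j, hj, hjc⟩ := pigeon (fun j => (I (38 - j)).card) (fun j => by
      by_cases h : j < 38
      · have : 38 - j = (38 - (j + 1)) + 1 := by omega
        simp only [this]
        exact Finset.card_le_card (hmono _)
      · have : 38 - j = 38 - (j + 1) := by omega
        simp only [this]; exact le_rfl) h38 h0
  have e1 : 38 - j = (37 - j) + 1 := by omega
  have e2 : 38 - (j + 1) = 37 - j := by omega
  simp only [e1, e2] at hjc
  set i := 37 - j with hi
  have hEq : I (i + 1) = I i := Finset.eq_of_subset_of_card_le (hmono i) hjc.ge
  obtain ⟨R, hR⟩ := clus_exists b (Top K u) lam hT e (ε ^ (500 * 12 ^ (i + 1))) (ε ^ (500 * 12 ^ i)) (by positivity)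
    (by positivity) (I (i + 1)) (fun k hk => (hmem _ _).mp hk) (fun k hk => by
      rw [hEq, hmem] at hk
      exact (not_le.mp hk).le)
  refine ⟨i, by omega, e, _, R, hebd, ?_, ?_, hR⟩
  · rw [Wsp_finrank]
    have : ∀ a ≤ 38, (I 38).card ≤ (I (38 - a)).card := by
      intro a
      induction a with
      | zero => intro _; exact le_rfl
      | succ a ih =>
        intro ha
        refine (ih (by omega)).trans ?_
        have : 38 - a = (38 - (a + 1)) + 1 := by omega
        rw [this]
        exact Finset.card_le_card (hmono _)
    have := this j (by omega)
    rw [e1] at this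
    omega
  · rw [Wsp_finrank]
    have : ∀ a, (I a).card ≤ (I 0).card := by
      intro a
      induction a with
      | zero => exact le_rfl
      | succ a ih => exact (Finset.card_le_card (hmono a)).trans ih
    have := this (i + 1)
    omega

end MLS

namespace MLS

variable {ι : Type*} [Fintype ι] [DecidableEq ι]

lemma pert (K : Matrix ι ι ℝ) (x : ι) (u u' : ι → ℝ) (ρ : ℝ) (hρ : 0 ≤ ρ)
    (h : ∀ z, z ≠ x → |u' z - u z| ≤ ρ / ((Fintype.card ι : ℝ) + 1)) :
    ∃ F : EuclideanSpace ℝ (ι × Bool) →ₗ[ℝ] EuclideanSpace ℝ (ι × Bool),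
      Top K u' = Top K u + (u' x - u x) • So x + F ∧ ∀ v, ‖F v‖ ≤ ρ * ‖v‖ := by
  refine ⟨∑ z ∈ Finset.univ.erase x, (u' z - u z) • So z, ?_, ?_⟩
  · ext1 v
    rw [Top_diff K u u', ← Finset.add_sum_erase _ _ (Finset.mem_univ x)]
    simp [LinearMap.sum_apply, add_assoc]
  · intro v
    rw [LinearMap.sum_apply]
    refine (norm_sum_le _ _).trans ?_
    have hb : ∀ z ∈ Finset.univ.erase x, ‖((u' z - u z) • So z) v‖ ≤ ρ / ((Fintype.card ι : ℝ) + 1) * ‖v‖ := by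
      intro z hz
      rw [LinearMap.smul_apply, norm_smul, Real.norm_eq_abs]
      exact mul_le_mul (h z (Finset.ne_of_mem_erase hz)) (So_norm z v) (norm_nonneg _) (by positivity)
    refine (Finset.sum_le_sum hb).trans ?_
    rw [Finset.sum_const, nsmul_eq_mul]
    have hc : ((Finset.univ.erase x).card : ℝ) ≤ (Fintype.card ι : ℝ) + 1 := by
      have := Finset.card_le_univ (Finset.univ.erase x)
      have : ((Finset.univ.erase x).card : ℝ) ≤ (Fintype.card ι : ℝ) := by exact_mod_cast this
      linarith
    calc _ ≤ ((Fintype.card ι : ℝ) + 1) * (ρ / ((Fintype.card ι : ℝ) + 1) * ‖v‖) := by gcongr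
      _ = ρ * ‖v‖ := by field_simp

/-- First type of event. -/
def S1 (K : Matrix ι ι ℝ) (ρ r κ θ : ℝ) (N : ℕ) (ℓ : ℤ) (x : ι) : Set (ι → ℝ) :=
  {u | ∃ (e : ℝ) (W : Submodule ℝ (EuclideanSpace ℝ (ι × Bool)))
      (R : EuclideanSpace ℝ (ι × Bool) →ₗ[ℝ] EuclideanSpace ℝ (ι × Bool)), ⌊e / θ⌋ = ℓ ∧
      Module.finrank ℝ W = N ∧ Clus (Top K u) e W R ρ r ∧
      ∃ ψ ∈ W, ∃ ψ' ∈ W, ‖ψ‖ = 1 ∧ ‖ψ'‖ = 1 ∧ inner ℝ ψ' ψ = 0 ∧ κ ≤ |inner ℝ ψ' (So x ψ)|}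

/-- Second type of event. -/
def S2 (K : Matrix ι ι ℝ) (ρ r κ κ' θ : ℝ) (N : ℕ) (ℓ : ℤ) (x y : ι) : Set (ι → ℝ) :=
  {u | ∃ (e : ℝ) (W : Submodule ℝ (EuclideanSpace ℝ (ι × Bool)))
      (R : EuclideanSpace ℝ (ι × Bool) →ₗ[ℝ] EuclideanSpace ℝ (ι × Bool)), ⌊e / θ⌋ = ℓ ∧
      Module.finrank ℝ W = N ∧ Clus (Top K u) e W R ρ r ∧
      (∀ v ∈ W, |inner ℝ v (So x v)| ≤ 3 * κ * ‖v‖ ^ 2) ∧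
      ∃ ψ ∈ W, ‖ψ‖ = 1 ∧ κ' ≤ |inner ℝ (So x ψ) (R (So y ψ))|}

lemma label_close (θ e e' : ℝ) (hθ : 0 < θ) (h : ⌊e / θ⌋ = ⌊e' / θ⌋) : |e' - e| ≤ θ := by
  have h1 := Int.abs_sub_lt_one_of_floor_eq_floor h.symm
  rw [← sub_div, abs_div, abs_of_pos hθ, div_lt_one hθ] at h1
  exact h1.le

lemma S1_le (K : Matrix ι ι ℝ) (hK : K.IsSymm) (ρ r κ θ τ : ℝ) (N : ℕ) (ℓ : ℤ) (x : ι) (hρ : 0 < ρ) (hr : 0 < r)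
    (hκ : 0 < κ) (hκ1 : κ ≤ 1) (hθ : 0 < θ) (hθr : θ ≤ r / 2) (hτ : 0 < τ) (hτ1 : τ ≤ 1)
    (hsm : τ + 2 * ρ ≤ κ * r / 8) :
    unifPi ι (S1 K ρ r κ θ N ℓ x) ≤ ENNReal.ofReal (3 * (12 * ρ / κ) / τ) := by
  apply iso_measure x _ (ρ / ((Fintype.card ι : ℝ) + 1)) τ (12 * ρ / κ) (by positivity) hτ hτ1 (by positivity)
  rintro u' ⟨e', W', R', hl', hN', hc', -⟩ u ⟨e, W, R, hl, hN, hc, ψ, hψ, ψ', hψ', n1, n2, ho, hk⟩ hz hx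
  obtain ⟨F, hF1, hF2⟩ := pert K x u u' ρ hρ.le hz
  exact hc.iso1 hc' hr hρ.le hF1 (So_norm x) hF2 (label_close θ e e' hθ (hl.trans hl'.symm)) hθr
    (hN.trans hN'.symm) (Top_symm K hK u) hκ hκ1 (by linarith) ψ ψ' hψ hψ' n1 n2 ho hk

lemma S2_le (K : Matrix ι ι ℝ) (ρ r κ κ' θ τ : ℝ) (N : ℕ) (ℓ : ℤ) (x y : ι) (hρ : 0 < ρ) (hr : 0 < r)
    (hr1 : r ≤ 1) (hκ : 0 < κ) (hκ' : 0 < κ') (hκ1 : κ' ≤ 1) (hθ : 0 < θ) (hθr : θ ≤ κ' * r ^ 2 / 32)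
    (hτ : 0 < τ) (hτ1 : τ ≤ 1) (hτ2 : τ ≤ κ' * r ^ 2 / 160) (hρκ : ρ ≤ κ * r / 8) (hρr : ρ ≤ r / 16) :
    unifPi ι (S2 K ρ r κ κ' θ N ℓ x y) ≤ ENNReal.ofReal (3 * (16 * κ / κ') / τ) := by
  apply iso_measure y _ (ρ / ((Fintype.card ι : ℝ) + 1)) τ (16 * κ / κ') (by positivity) hτ hτ1 (by positivity)
  rintro u' ⟨e', W', R', hl', hN', hc', hq', -⟩ u ⟨e, W, R, hl, hN, hc, hq, ψ, hψ, n1, hk⟩ hz hx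
  obtain ⟨F, hF1, hF2⟩ := pert K y u u' ρ hρ.le hz
  exact hc.iso2 hc' hr hr1 hρ.le hF1 (So_norm y) hF2 (label_close θ e e' hθ (hl.trans hl'.symm)) hθr
    (hN.trans hN'.symm) (So_symm x) (So_norm x) hκ hκ' hκ1 (hx.trans hτ2) hρκ hρr hq hq' ψ hψ n1 hk

/-- The label range. -/
noncomputable def lab (ε θ : ℝ) : Finset ℤ := Finset.Icc (-⌈3 / (ε * θ)⌉) ⌈3 / (ε * θ)⌉

lemma lab_mem (ε θ e : ℝ) (hε : 0 < ε) (hθ : 0 < θ) (he : |e| ≤ 3 / ε) : ⌊e / θ⌋ ∈ lab ε θ := by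
  obtain ⟨h1, h2⟩ := abs_le.mp he
  have hc := Int.le_ceil (3 / (ε * θ))
  have e1 : 3 / (ε * θ) = 3 / ε / θ := by rw [div_div]
  unfold lab
  rw [Finset.mem_Icc]
  constructor
  · rw [Int.le_floor]
    push_cast
    have : -(3 / (ε * θ)) ≤ e / θ := by rw [e1, ← neg_div]; gcongr
    linarith
  · have : e / θ ≤ 3 / (ε * θ) := by rw [e1]; gcongr
    have h3 := Int.floor_le (e / θ)
    exact_mod_cast h3.trans (this.trans hc)

lemma lab_card (ε θ : ℝ) (hε : 0 < ε) (hε1 : ε ≤ 1) (hθ : 0 < θ) (hθ1 : θ ≤ 1) :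
    ((lab ε θ).card : ℝ) ≤ 10 / (ε * θ) := by
  have hc := (Int.ceil_lt_add_one (3 / (ε * θ))).le
  have hc0 : 0 ≤ ⌈3 / (ε * θ)⌉ := Int.ceil_nonneg (by positivity)
  have h1 : 1 ≤ 1 / (ε * θ) := by
    rw [le_div_iff₀ (by positivity), one_mul]
    calc ε * θ ≤ 1 * 1 := by gcongr
      _ = 1 := by norm_num
  unfold lab
  rw [Int.card_Icc]
  have e2 : (((⌈3 / (ε * θ)⌉ + 1 - -⌈3 / (ε * θ)⌉).toNat : ℤ) : ℝ) = 2 * ⌈3 / (ε * θ)⌉ + 1 := by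
    rw [Int.toNat_of_nonneg (by omega)]
    push_cast; ring
  have e3 : 10 / (ε * θ) = 2 * (3 / (ε * θ)) + 4 * (1 / (ε * θ)) := by ring
  rw [e3]
  have e4 : (((⌈3 / (ε * θ)⌉ + 1 - -⌈3 / (ε * θ)⌉).toNat : ℤ) : ℝ) =
    (((⌈3 / (ε * θ)⌉ + 1 - -⌈3 / (ε * θ)⌉).toNat : ℕ) : ℝ) := by norm_cast
  rw [← e4, e2]
  linarith

/-- Union bound over labels and sites, first type. -/
lemma U1_le (K : Matrix ι ι ℝ) (hK : K.IsSymm) (ε : ℝ) (hε : 0 < ε) (hε1 : ε ≤ 1 / 10 ^ 6)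
    (hV : (Fintype.card ι : ℝ) ≤ 1 / ε) (m N : ℕ) (hm : 500 ≤ m) :
    unifPi ι (⋃ ℓ ∈ lab ε (ε ^ (2 * m + 4)), ⋃ x, S1 K (ε ^ (12 * m)) (ε ^ m) (ε ^ (4 * m + 20)) (ε ^ (2 * m + 4)) N ℓ x)
      ≤ ENNReal.ofReal (ε ^ 6) := by
  have hε2 : ε ≤ 1 := hε1.trans (by norm_num)
  have pw : ∀ {a c : ℕ}, a ≤ c → ε ^ c ≤ ε ^ a := fun h => pow_le_pow_of_le_one hε.le hε2 h
  set B := ε ^ (5 * m + 20) with hB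
  set A := ε ^ (4 * m + 20) with hA
  set C := ε ^ (3 * m - 40) with hC
  have hB0 : 0 < B := by positivity
  have hA0 : 0 < A := by positivity
  have hAr : A * ε ^ m = B := by rw [hA, hB, ← pow_add]; congr 1; omega
  have hρ : ε ^ (12 * m) = C * (A * B) := by rw [hA, hB, hC, ← pow_add, ← pow_add]; congr 1; omega
  have hρ2 : ε ^ (12 * m) ≤ ε * B := by
    rw [hB, ← pow_succ']; exact pw (by omega)
  have hB1 : B ≤ 1 := pow_le_one₀ hε.le hε2
  have each : ∀ ℓ x, unifPi ι (S1 K (ε ^ (12 * m)) (ε ^ m) A (ε ^ (2 * m + 4)) N ℓ x) ≤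
      ENNReal.ofReal (576 * C) := by
    intro ℓ x
    refine (S1_le K hK _ _ _ _ (B / 16) N ℓ x (by positivity) (by positivity) hA0 (pow_le_one₀ hε.le hε2)
      (by positivity) ?_ (by positivity) (by linarith) ?_).trans ?_
    · have : ε ^ (2 * m + 4) ≤ ε * ε ^ m := by rw [← pow_succ']; exact pw (by omega)
      have h0 : 0 < ε ^ m := by positivity
      nlinarith
    · rw [hAr]
      nlinarith
    · rw [hρ]
      apply le_of_eq
      congr 1
      field_simp
      ring
  refine (measure_biUnion_finset_le _ _).trans ?_
  refine (Finset.sum_le_sum fun ℓ _ => (measure_iUnion_fintype_le _ _).trans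
    (Finset.sum_le_sum fun x _ => each ℓ x)).trans ?_
  simp only [Finset.sum_const, Finset.card_univ, nsmul_eq_mul]
  rw [← ENNReal.ofReal_natCast, ← ENNReal.ofReal_natCast, ← ENNReal.ofReal_mul (by positivity),
    ← ENNReal.ofReal_mul (by positivity)]
  apply ENNReal.ofReal_le_ofReal
  have hl := lab_card ε (ε ^ (2 * m + 4)) hε hε2 (by positivity) (pow_le_one₀ hε.le hε2)
  have hCe : C = ε ^ 7 * (ε * ε ^ (2 * m + 4)) * ε * ε ^ (m - 53) := by
    rw [hC, ← pow_succ', ← pow_add, ← pow_succ, ← pow_add]; congr 1; omega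
  calc ((lab ε (ε ^ (2 * m + 4))).card : ℝ) * ((Fintype.card ι : ℝ) * (576 * C))
      ≤ 10 / (ε * ε ^ (2 * m + 4)) * (1 / ε * (576 * C)) := by
        have hC0 : 0 < C := by positivity
        gcongr
    _ = 5760 * ε ^ 7 * ε ^ (m - 53) := by
        rw [hCe]
        have h0 : 0 < ε ^ (2 * m + 4) := by positivity
        field_simp
        ring
    _ ≤ 5760 * ε ^ 7 * 1 := by gcongr; exact pow_le_one₀ hε.le hε2
    _ = (5760 * ε) * ε ^ 6 := by ring
    _ ≤ 1 * ε ^ 6 := by gcongr; linarith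
    _ = _ := one_mul _

/-- Union bound over labels and sites, second type. -/
lemma U2_le (K : Matrix ι ι ℝ) (ε : ℝ) (hε : 0 < ε) (hε1 : ε ≤ 1 / 10 ^ 6)
    (hV : (Fintype.card ι : ℝ) ≤ 1 / ε) (m N : ℕ) (hm : 500 ≤ m) :
    unifPi ι (⋃ ℓ ∈ lab ε (ε ^ (2 * m + 4)), ⋃ p : ι × ι,
      S2 K (ε ^ (12 * m)) (ε ^ m) (ε ^ (4 * m + 20)) (ε ^ 3) (ε ^ (2 * m + 4)) N ℓ p.1 p.2)
      ≤ ENNReal.ofReal (ε ^ 6) := by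
  have hε2 : ε ≤ 1 := hε1.trans (by norm_num)
  have pw : ∀ {a c : ℕ}, a ≤ c → ε ^ c ≤ ε ^ a := fun h => pow_le_pow_of_le_one hε.le hε2 h
  set B := ε ^ (2 * m + 3) with hB
  set A := ε ^ (4 * m + 20) with hA
  set C := ε ^ (2 * m + 14) with hC
  have hB0 : 0 < B := by positivity
  have hA0 : 0 < A := by positivity
  have hBr : ε ^ 3 * (ε ^ m) ^ 2 = B := by rw [hB, ← pow_mul, ← pow_add]; congr 1; omega
  have hAe : A = C * (ε ^ 3 * B) := by rw [hA, hB, hC, ← pow_add, ← pow_add]; congr 1; omega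
  have hB1 : B ≤ 1 := pow_le_one₀ hε.le hε2
  have each : ∀ ℓ (p : ι × ι), unifPi ι (S2 K (ε ^ (12 * m)) (ε ^ m) A (ε ^ 3) (ε ^ (2 * m + 4)) N ℓ p.1 p.2) ≤
      ENNReal.ofReal (7680 * C) := by
    intro ℓ p
    refine (S2_le K _ _ _ _ _ (B / 160) N ℓ p.1 p.2 (by positivity) (by positivity) (pow_le_one₀ hε.le hε2) hA0
      (by positivity) (pow_le_one₀ hε.le hε2)
      (by positivity) ?_ (by positivity) (by linarith) (by rw [hBr]) ?_ ?_).trans ?_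
    · rw [hBr]
      have : ε ^ (2 * m + 4) = ε * B := by rw [hB, ← pow_succ']
      rw [this]
      nlinarith
    · have h1 : ε ^ (12 * m) ≤ ε * (A * ε ^ m) := by
        rw [hA, ← pow_add, ← pow_succ']; exact pw (by omega)
      have h0 : 0 < A * ε ^ m := by positivity
      nlinarith
    · have h1 : ε ^ (12 * m) ≤ ε * ε ^ m := by
        rw [← pow_succ']; exact pw (by omega)
      have h0 : 0 < ε ^ m := by positivity
      nlinarith
    · rw [hAe]
      apply le_of_eq
      congr 1
      field_simp
      ring
  refine (measure_biUnion_finset_le _ _).trans ?_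
  refine (Finset.sum_le_sum fun ℓ _ => (measure_iUnion_fintype_le _ _).trans
    (Finset.sum_le_sum fun x _ => each ℓ x)).trans ?_
  simp only [Finset.sum_const, Finset.card_univ, nsmul_eq_mul]
  rw [← ENNReal.ofReal_natCast, ← ENNReal.ofReal_natCast, ← ENNReal.ofReal_mul (by positivity),
    ← ENNReal.ofReal_mul (by positivity)]
  apply ENNReal.ofReal_le_ofReal
  have hl := lab_card ε (ε ^ (2 * m + 4)) hε hε2 (by positivity) (pow_le_one₀ hε.le hε2)
  have hCe : C = ε ^ 7 * (ε * ε ^ (2 * m + 4)) * ε ^ 2 := by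
    rw [hC, ← pow_succ', ← pow_add, ← pow_add]; congr 1; omega
  have hV2 : ((Fintype.card (ι × ι) : ℕ) : ℝ) ≤ 1 / ε ^ 2 := by
    rw [Fintype.card_prod]; push_cast
    calc (Fintype.card ι : ℝ) * Fintype.card ι ≤ 1 / ε * (1 / ε) := by gcongr
      _ = _ := by ring
  calc ((lab ε (ε ^ (2 * m + 4))).card : ℝ) * ((Fintype.card (ι × ι) : ℝ) * (7680 * C))
      ≤ 10 / (ε * ε ^ (2 * m + 4)) * (1 / ε ^ 2 * (7680 * C)) := by
        have hC0 : 0 < C := by positivity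
        gcongr
    _ = (76800 * ε) * ε ^ 6 := by
        rw [hCe]
        have h0 : 0 < ε ^ (2 * m + 4) := by positivity
        field_simp
        ring
    _ ≤ 1 * ε ^ 6 := by gcongr; linarith
    _ = _ := one_mul _

end MLS

namespace MLS

variable {ι : Type*} [Fintype ι] [DecidableEq ι]

lemma cover (K : Matrix ι ι ℝ) (hK1 : ∀ x y, |K x y| ≤ 1) (ε : ℝ) (hε : 0 < ε) (hε1 : ε ≤ 1 / 10 ^ 6)
    (hV : (Fintype.card ι : ℝ) ≤ 1 / ε) (u : ι → ℝ) (hu : ∀ x, |u x| ≤ 1) (hB : u ∉ BadI K ε)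
    {n : Type*} [Fintype n] [DecidableEq n]
    (b : OrthonormalBasis n ℝ (EuclideanSpace ℝ (ι × Bool))) (lam : n → ℝ) (hT : ∀ i, Top K u (b i) = lam i • b i)
    (α β : n) (hαβ : α ≠ β) (hδ : |lam α - lam β| ≤ ε ^ (500 * 12 ^ 38)) :
    ∃ i < 38, ∃ N < 40, (u ∈ ⋃ ℓ ∈ lab ε (ε ^ (2 * (500 * 12 ^ i) + 4)), ⋃ x, S1 K (ε ^ (12 * (500 * 12 ^ i)))
        (ε ^ (500 * 12 ^ i)) (ε ^ (4 * (500 * 12 ^ i) + 20)) (ε ^ (2 * (500 * 12 ^ i) + 4)) N ℓ x) ∨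
      (u ∈ ⋃ ℓ ∈ lab ε (ε ^ (2 * (500 * 12 ^ i) + 4)), ⋃ p : ι × ι, S2 K (ε ^ (12 * (500 * 12 ^ i)))
        (ε ^ (500 * 12 ^ i)) (ε ^ (4 * (500 * 12 ^ i) + 20)) (ε ^ 3) (ε ^ (2 * (500 * 12 ^ i) + 4)) N ℓ p.1 p.2) := by
  obtain ⟨i, hi, e, W, R, he, hW2, hW40, hc⟩ := cluster K hK1 ε hε hε1 hV u hu hB b lam hT α β hαβ hδ
  refine ⟨i, hi, Module.finrank ℝ W, hW40, ?_⟩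
  have hm : 500 ≤ 500 * 12 ^ i := Nat.le_mul_of_pos_right _ (by positivity)
  rw [show 500 * 12 ^ (i + 1) = 12 * (500 * 12 ^ i) by ring] at hc
  generalize 500 * 12 ^ i = m at *
  have hε2 : ε ≤ 1 := hε1.trans (by norm_num)
  have pw : ∀ {a c : ℕ}, a ≤ c → ε ^ c ≤ ε ^ a := fun h => pow_le_pow_of_le_one hε.le hε2 h
  have hl := lab_mem ε (ε ^ (2 * m + 4)) e hε (by positivity) he
  by_cases h1 : ∃ x, ∃ ψ ∈ W, ∃ ψ' ∈ W, ‖ψ‖ = 1 ∧ ‖ψ'‖ = 1 ∧ inner ℝ ψ' ψ = 0 ∧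
      ε ^ (4 * m + 20) ≤ |inner ℝ ψ' (So x ψ)|
  · obtain ⟨x, hx⟩ := h1
    left
    simp only [Set.mem_iUnion]
    exact ⟨_, hl, x, e, W, R, rfl, rfl, hc, hx⟩
  · right
    push Not at h1
    have hq : ∀ x, ∀ v ∈ W, |inner ℝ v (So x v)| ≤ 3 * ε ^ (4 * m + 20) * ‖v‖ ^ 2 := by
      intro x
      exact form_bound W hW2 (So x) (So_symm x) (co x) (co_form x) (ε ^ (4 * m + 20))
        (fun v hv v' hv' n1 n2 ho => h1 x v hv v' hv' n1 n2 ho)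
    obtain ⟨ψ, hψ, n1, -⟩ := exists_orth W hW2 0
    have hVε : (Fintype.card ι : ℝ) * ε ≤ 1 := by rwa [le_div_iff₀ hε] at hV
    obtain ⟨x, y, hxy⟩ := structural K u e (ε ^ (12 * m)) (ε ^ m) (ε ^ (4 * m + 20)) (ε ^ 3) W R hc (by positivity)
      (by positivity) (by positivity) hq (by
        set V := (Fintype.card ι : ℝ) with hVd
        have hV0 : 0 ≤ V := by positivity
        have a1 : 3 * V * ε ^ (4 * m + 20) ≤ 3 * ε := by
          have : ε ^ (4 * m + 20) ≤ ε ^ 2 := pw (by omega)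
          calc 3 * V * ε ^ (4 * m + 20) ≤ 3 * V * ε ^ 2 := by gcongr
            _ = 3 * (V * ε) * ε := by ring
            _ ≤ 3 * 1 * ε := by gcongr
            _ = _ := by ring
        have a2 : ε ^ (12 * m) / ε ^ m ≤ ε := by
          rw [div_le_iff₀ (by positivity), ← pow_succ']
          exact pw (by omega)
        have a3 : 2 * V ^ 2 * ε ^ 3 ≤ 2 * ε := by
          calc 2 * V ^ 2 * ε ^ 3 = 2 * (V * ε) ^ 2 * ε := by ring
            _ ≤ 2 * 1 * ε := by gcongr; exact pow_le_one₀ (by positivity) hVε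
            _ = _ := by ring
        have a4 : 5 * V * Real.sqrt (ε ^ (4 * m + 20)) / ε ^ m ≤ 5 * ε := by
          rw [show 4 * m + 20 = (2 * m + 10) * 2 by ring, pow_mul, Real.sqrt_sq (by positivity), div_le_iff₀ (by positivity)]
          have : ε ^ (2 * m + 10) ≤ ε * (ε * ε ^ m) := by rw [← pow_succ', ← pow_succ']; exact pw (by omega)
          calc 5 * V * ε ^ (2 * m + 10) ≤ 5 * V * (ε * (ε * ε ^ m)) := by gcongr
            _ = 5 * (V * ε) * (ε * ε ^ m) := by ring
            _ ≤ 5 * 1 * (ε * ε ^ m) := by gcongr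
            _ = _ := by ring
        linarith) ψ hψ n1
    simp only [Set.mem_iUnion]
    exact ⟨_, hl, (x, y), e, W, R, rfl, rfl, hc, hq x, ψ, hψ, n1, hxy⟩

lemma spacing (K : Matrix ι ι ℝ) (hK : K.IsSymm) (hK1 : ∀ x y, |K x y| ≤ 1) (ε : ℝ) (hε : 0 < ε)
    (hε1 : ε ≤ 1 / 10 ^ 6) (hV : (Fintype.card ι : ℝ) ≤ 1 / ε) {n : Type*} [Fintype n] [DecidableEq n]
    (S : Set (ι → ℝ)) (hS : ∀ u ∈ S, ∃ (b : OrthonormalBasis n ℝ (EuclideanSpace ℝ (ι × Bool))) (lam : n → ℝ) (α β : n),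
      (∀ i, Top K u (b i) = lam i • b i) ∧ α ≠ β ∧ |lam α - lam β| ≤ ε ^ (500 * 12 ^ 38)) :
    unifPi ι S ≤ ENNReal.ofReal ε := by
  have hε2 : ε ≤ 1 := hε1.trans (by norm_num)
  set U1 : ℕ → ℕ → Set (ι → ℝ) := fun i N => ⋃ ℓ ∈ lab ε (ε ^ (2 * (500 * 12 ^ i) + 4)), ⋃ x, S1 K (ε ^ (12 * (500 * 12 ^ i)))
        (ε ^ (500 * 12 ^ i)) (ε ^ (4 * (500 * 12 ^ i) + 20)) (ε ^ (2 * (500 * 12 ^ i) + 4)) N ℓ x with hU1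
  set U2 : ℕ → ℕ → Set (ι → ℝ) := fun i N => ⋃ ℓ ∈ lab ε (ε ^ (2 * (500 * 12 ^ i) + 4)), ⋃ p : ι × ι, S2 K (ε ^ (12 * (500 * 12 ^ i)))
        (ε ^ (500 * 12 ^ i)) (ε ^ (4 * (500 * 12 ^ i) + 20)) (ε ^ 3) (ε ^ (2 * (500 * 12 ^ i) + 4)) N ℓ p.1 p.2 with hU2
  have hsub : S ⊆ {u | ¬ ∀ x, |u x| ≤ 1} ∪ (BadI K ε ∪ ⋃ i ∈ Finset.range 38, ⋃ N ∈ Finset.range 40, (U1 i N ∪ U2 i N)) := by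
    intro u hu
    by_cases hc : ∀ x, |u x| ≤ 1
    swap
    · exact Or.inl hc
    right
    by_cases hB : u ∈ BadI K ε
    · exact Or.inl hB
    right
    obtain ⟨b, lam, α, β, hT, hαβ, hδ⟩ := hS u hu
    obtain ⟨i, hi, N, hN, h⟩ := cover K hK1 ε hε hε1 hV u hc hB b lam hT α β hαβ hδ
    rw [Set.mem_iUnion₂]
    refine ⟨i, Finset.mem_range.mpr hi, ?_⟩
    rw [Set.mem_iUnion₂]
    exact ⟨N, Finset.mem_range.mpr hN, h⟩
  have hcube : unifPi ι {u | ¬ ∀ x, |u x| ≤ 1} = 0 := cube_ae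
  have hm : ∀ i : ℕ, 500 ≤ 500 * 12 ^ i := fun i => Nat.le_mul_of_pos_right _ (by positivity)
  have hU : unifPi ι (⋃ i ∈ Finset.range 38, ⋃ N ∈ Finset.range 40, (U1 i N ∪ U2 i N)) ≤
      ENNReal.ofReal (38 * (40 * (2 * ε ^ 6))) := by
    calc _ ≤ ∑ i ∈ Finset.range 38, ∑ N ∈ Finset.range 40, unifPi ι (U1 i N ∪ U2 i N) :=
          (measure_biUnion_finset_le _ _).trans (Finset.sum_le_sum fun i _ => measure_biUnion_finset_le _ _)
      _ ≤ ∑ _i ∈ Finset.range 38, ∑ _N ∈ Finset.range 40, ENNReal.ofReal (2 * ε ^ 6) := by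
          refine Finset.sum_le_sum fun i _ => Finset.sum_le_sum fun N _ => ?_
          refine (measure_union_le _ _).trans ?_
          rw [two_mul, ENNReal.ofReal_add (by positivity) (by positivity)]
          exact add_le_add (U1_le K hK ε hε hε1 hV _ N (hm i)) (U2_le K ε hε hε1 hV _ N (hm i))
      _ = _ := by
          simp only [Finset.sum_const, Finset.card_range, nsmul_eq_mul]
          rw [ENNReal.ofReal_mul (p := 38) (by norm_num), ENNReal.ofReal_mul (p := 40) (by norm_num)]
          simp
  refine (measure_mono hsub).trans ((measure_union_le _ _).trans ?_)
  rw [hcube, zero_add]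
  refine (measure_union_le _ _).trans ?_
  refine (add_le_add (BadI_le K hK ε hε hε1 hV) hU).trans ?_
  rw [← ENNReal.ofReal_add (by positivity) (by positivity)]
  apply ENNReal.ofReal_le_ofReal
  have h6 : ε ^ 6 ≤ ε ^ 2 := pow_le_pow_of_le_one hε.le hε2 (by norm_num)
  nlinarith

end MLS

namespace MLS

section rot
variable {ι : Type*} [Fintype ι] [DecidableEq ι]

/-- The rotation to the basis in which the off-diagonal Pauli matrix is diagonal. -/
noncomputable def Jl (ι : Type*) : EuclideanSpace ℝ (ι × Fin 2) ≃ₗ[ℝ] EuclideanSpace ℝ (ι × Bool) where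
  toFun v := WithLp.toLp 2 fun s => (Real.sqrt 2)⁻¹ * (v (s.1, 0) + (if s.2 then -1 else 1) * v (s.1, 1))
  invFun w := WithLp.toLp 2 fun s => (Real.sqrt 2)⁻¹ *
    (w (s.1, false) + (if s.2 = 0 then 1 else -1) * w (s.1, true))
  map_add' v w := by
    ext ⟨x, b⟩
    simp only [PiLp.add_apply]
    ring
  map_smul' c v := by
    ext ⟨x, b⟩
    simp only [PiLp.smul_apply, smul_eq_mul, RingHom.id_apply]
    ring
  left_inv v := by
    have hs : (Real.sqrt 2)⁻¹ * (Real.sqrt 2)⁻¹ = 1 / 2 := by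
      rw [← mul_inv, Real.mul_self_sqrt (by norm_num)]; norm_num
    ext ⟨x, b⟩
    fin_cases b
    · simp
      linear_combination (2 * v (x, 0)) * hs
    · simp
      linear_combination (2 * v (x, 1)) * hs
  right_inv v := by
    have hs : (Real.sqrt 2)⁻¹ * (Real.sqrt 2)⁻¹ = 1 / 2 := by
      rw [← mul_inv, Real.mul_self_sqrt (by norm_num)]; norm_num
    ext ⟨x, b⟩
    cases b
    · simp
      linear_combination (2 * v (x, false)) * hs
    · simp
      linear_combination (2 * v (x, true)) * hs

lemma Jl_apply (v : EuclideanSpace ℝ (ι × Fin 2)) (x : ι) (b : Bool) :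
    Jl ι v (x, b) = (Real.sqrt 2)⁻¹ * (v (x, 0) + (if b then -1 else 1) * v (x, 1)) := rfl

/-- The rotation as an isometry. -/
noncomputable def Ji (ι : Type*) [Fintype ι] [DecidableEq ι] :
    EuclideanSpace ℝ (ι × Fin 2) ≃ₗᵢ[ℝ] EuclideanSpace ℝ (ι × Bool) where
  toLinearEquiv := Jl ι
  norm_map' v := by
    have hs : (Real.sqrt 2)⁻¹ * (Real.sqrt 2)⁻¹ = 1 / 2 := by
      rw [← mul_inv, Real.mul_self_sqrt (by norm_num)]; norm_num
    rw [← sq_eq_sq₀ (norm_nonneg _) (norm_nonneg _), norm_pair, EuclideanSpace.norm_sq_eq,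
      Fintype.sum_prod_type]
    refine Finset.sum_congr rfl fun z _ => ?_
    rw [Fin.sum_univ_two, Jl_apply, Jl_apply]
    simp
    linear_combination (2 * v (z, 0) ^ 2 + 2 * v (z, 1) ^ 2) * hs

lemma Ji_apply (v : EuclideanSpace ℝ (ι × Fin 2)) (x : ι) (b : Bool) :
    Ji ι v (x, b) = (Real.sqrt 2)⁻¹ * (v (x, 0) + (if b then -1 else 1) * v (x, 1)) := rfl

end rot

/-- The hopping matrix. -/
noncomputable def Kad (d : ℕ) (γ : ℝ) (Λ : Finset (Fin d → ℤ)) : Matrix {x // x ∈ Λ} {x // x ∈ Λ} ℝ := fun x y =>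
  if dist1 (x : Fin d → ℤ) (y : Fin d → ℤ) = 1 then γ else 0

lemma dist1_comm {d : ℕ} (x y : Fin d → ℤ) : dist1 x y = dist1 y x := by
  unfold dist1
  refine Finset.sum_congr rfl fun i _ => ?_
  omega

lemma dist1_self {d : ℕ} (x : Fin d → ℤ) : dist1 x x = 0 := by simp [dist1]

lemma Kad_symm (d : ℕ) (γ : ℝ) (Λ : Finset (Fin d → ℤ)) : (Kad d γ Λ).IsSymm := by
  ext x y
  simp only [Kad, Matrix.transpose_apply, dist1_comm]

lemma Ham_apply (d : ℕ) (γ : ℝ) (Λ : Finset (Fin d → ℤ)) (u : {x // x ∈ Λ} → ℝ) (v : {x // x ∈ Λ} × Fin 2 → ℝ)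
    (x : {x // x ∈ Λ}) (c : Fin 2) : (Ham d γ Λ u *ᵥ v) (x, c) = ∑ y, Kad d γ Λ x y * v (y, c) +
      ((if c = 0 then 1 else -1) * u x * v (x, c) + v (x, 1 - c)) := by
  have h0 : (Ham d γ Λ u *ᵥ v) (x, c) = ∑ j, Ham d γ Λ u (x, c) j * v j := rfl
  rw [h0, Fintype.sum_prod_type]
  have h : ∀ y, ∑ a, Ham d γ Λ u (x, c) (y, a) * v (y, a) = Kad d γ Λ x y * v (y, c) +
      (if x = y then (if c = 0 then 1 else -1) * u x * v (x, c) + v (x, 1 - c) else 0) := by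
    intro y
    rw [Fin.sum_univ_two]
    by_cases hz : x = y
    · subst hz
      fin_cases c <;> simp [Ham, Kad, dist1_self]
      ring
    · by_cases hd : dist1 (x : Fin d → ℤ) (y : Fin d → ℤ) = 1 <;> fin_cases c <;> simp [Ham, Kad, hz, hd]
  rw [Finset.sum_congr rfl fun y _ => h y, Finset.sum_add_distrib]
  simp

lemma Ham_rot (d : ℕ) (γ : ℝ) (Λ : Finset (Fin d → ℤ)) (u : {x // x ∈ Λ} → ℝ)
    (v : EuclideanSpace ℝ ({x // x ∈ Λ} × Fin 2)) :
    Top (Kad d γ Λ) u (Ji _ v) = Ji _ (WithLp.toLp 2 (Ham d γ Λ u *ᵥ v.ofLp)) := by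
  ext ⟨x, b⟩
  rw [Top_apply, Ji_apply, Ji_apply, Ji_apply]
  simp only [Ji_apply, Ham_apply]
  have : ∑ y, Kad d γ Λ x y * ((Real.sqrt 2)⁻¹ * (v (y, 0) + (if b then -1 else 1) * v (y, 1))) =
      (Real.sqrt 2)⁻¹ * (∑ y, Kad d γ Λ x y * v (y, 0) + (if b then -1 else 1) * ∑ y, Kad d γ Λ x y * v (y, 1)) := by
    rw [Finset.mul_sum, ← Finset.sum_add_distrib, Finset.mul_sum]
    exact Finset.sum_congr rfl fun y _ => by ring
  rw [this]
  cases b <;> simp <;> ring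

end MLS

/-- minimum level spacing. There are `b, γ₀ > 0` such that for all
`0 < γ ≤ γ₀`, every rectangle `Λ`, and every `0 < δ ≤ γ^{1/4}/4`, the probability that
two eigenvalues of `H(u)` (counted with multiplicity) are within `δ` of each other is
at most `|Λ|·exp(-b·|log γ|^{3/4}·|log δ|^{1/4})`. -/
theorem minimum_level_spacing (d : ℕ) (hd : 1 ≤ d) :
    ∃ b γ₀ : ℝ, 0 < b ∧ 0 < γ₀ ∧
      ∀ γ : ℝ, 0 < γ → γ ≤ γ₀ →
      ∀ Λ : Finset (Fin d → ℤ), (∃ a b', Λ = Finset.Icc a b') →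
      ∀ hherm : ∀ u : {x // x ∈ Λ} → ℝ, (Ham d γ Λ u).IsHermitian,
      ∀ δ : ℝ, 0 < δ → δ ≤ γ ^ ((1 : ℝ) / 4) / 4 →
      unifPi {x // x ∈ Λ}
          {u | ∃ α β : {x // x ∈ Λ} × Fin 2, α ≠ β ∧
            |(hherm u).eigenvalues α - (hherm u).eigenvalues β| < δ} ≤
        ENNReal.ofReal ((Λ.card : ℝ) *
          Real.exp (-(b * |Real.log γ| ^ ((3 : ℝ) / 4) * |Real.log δ| ^ ((1 : ℝ) / 4)))) := by
  obtain ⟨k, hk⟩ : ∃ k : ℕ, k = 500 * 12 ^ 38 := ⟨_, rfl⟩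
  have hk0 : (0 : ℝ) < k := by
    have : 0 < k := by rw [hk]; positivity
    exact_mod_cast this
  refine ⟨1 / (4 * k), Real.exp (-(80 * k)), by positivity, Real.exp_pos _, ?_⟩
  intro γ hγ hγ0 Λ _ hherm δ hδ hδγ
  have hlogγ : Real.log γ ≤ -(80 * k) := by
    have := Real.log_le_log hγ hγ0
    rwa [Real.log_exp] at this
  have hγ1 : γ ≤ 1 := hγ0.trans (by rw [Real.exp_le_one_iff]; linarith)
  have hlogδ : Real.log δ ≤ Real.log γ / 4 := by
    have h1 : δ ≤ γ ^ ((1 : ℝ) / 4) := by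
      have : 0 < γ ^ ((1 : ℝ) / 4) := by positivity
      linarith
    have := Real.log_le_log hδ h1
    rw [Real.log_rpow hγ] at this
    linarith
  set D := |Real.log δ| with hD
  have hDe : D = -Real.log δ := abs_of_neg (by linarith)
  have hLe : |Real.log γ| = -Real.log γ := abs_of_neg (by linarith)
  have hD20 : 20 * k ≤ D := by linarith
  set ε := Real.exp (-(D / k)) with hε
  have hε0 : 0 < ε := Real.exp_pos _
  have hε1 : ε ≤ 1 / 10 ^ 6 := by
    have h1 : 20 ≤ D / k := by rwa [le_div_iff₀ hk0]
    have h2 : ε ≤ Real.exp (-20) := by rw [hε]; apply Real.exp_le_exp.mpr; linarith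
    have h3 : (2 : ℝ) ^ 20 ≤ Real.exp 20 := by
      have h4 : (2 : ℝ) ≤ Real.exp 1 := by linarith [Real.add_one_le_exp (1 : ℝ)]
      have h5 : Real.exp 20 = Real.exp 1 ^ 20 := by rw [← Real.exp_nat_mul]; norm_num
      rw [h5]
      gcongr
    rw [Real.exp_neg] at h2
    refine h2.trans ?_
    rw [one_div]
    apply inv_anti₀ (by norm_num)
    refine le_trans ?_ h3
    norm_num
  have hεk : ε ^ (500 * 12 ^ 38) = δ := by
    rw [← hk, hε, ← Real.exp_nat_mul, mul_neg, mul_div_cancel₀ _ hk0.ne', hDe, neg_neg, Real.exp_log hδ]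
  have hrhs : ε ≤ Real.exp (-(1 / (4 * k) * |Real.log γ| ^ ((3 : ℝ) / 4) * D ^ ((1 : ℝ) / 4))) := by
    rw [hε]
    apply Real.exp_le_exp.mpr
    have hD0 : 0 < D := by linarith
    have h1 : |Real.log γ| ^ ((3 : ℝ) / 4) ≤ (4 * D) ^ ((3 : ℝ) / 4) := by
      apply Real.rpow_le_rpow (abs_nonneg _) _ (by norm_num)
      linarith
    have h2 : D ^ ((1 : ℝ) / 4) ≤ (4 * D) ^ ((1 : ℝ) / 4) := by
      apply Real.rpow_le_rpow hD0.le _ (by norm_num)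
      linarith
    have h3 : (4 * D) ^ ((3 : ℝ) / 4) * (4 * D) ^ ((1 : ℝ) / 4) = 4 * D := by
      rw [← Real.rpow_add (by positivity)]
      norm_num
    have h4 : |Real.log γ| ^ ((3 : ℝ) / 4) * D ^ ((1 : ℝ) / 4) ≤ 4 * D := by
      rw [← h3]
      gcongr
    have h5 : 1 / (4 * k) * |Real.log γ| ^ ((3 : ℝ) / 4) * D ^ ((1 : ℝ) / 4) ≤ 1 / (4 * k) * (4 * D) := by
      rw [mul_assoc]
      gcongr
    have h6 : 1 / (4 * k) * (4 * D) = D / k := by field_simp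
    linarith
  have hcard : (Λ.card : ℝ) = (Fintype.card {x // x ∈ Λ} : ℝ) := by rw [Fintype.card_coe]
  refine le_trans ?_ (ENNReal.ofReal_le_ofReal (mul_le_mul_of_nonneg_left hrhs (Nat.cast_nonneg _)))
  by_cases hV0 : Λ.card = 0
  · have hempty : {u : {x // x ∈ Λ} → ℝ | ∃ α β : {x // x ∈ Λ} × Fin 2, α ≠ β ∧
            |(hherm u).eigenvalues α - (hherm u).eigenvalues β| < δ} = ∅ := by
      rw [Set.eq_empty_iff_forall_notMem]
      rintro u ⟨α, -⟩
      exact (Finset.card_ne_zero_of_mem α.1.2) hV0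
    rw [hempty, measure_empty]
    exact zero_le
  by_cases hVl : 1 / ε ≤ (Λ.card : ℝ)
  · refine prob_le_one.trans ?_
    rw [← ENNReal.ofReal_one]
    apply ENNReal.ofReal_le_ofReal
    rwa [div_le_iff₀ hε0] at hVl
  · push Not at hVl
    have hV1 : (1 : ℝ) ≤ Λ.card := by
      have : 1 ≤ Λ.card := Nat.one_le_iff_ne_zero.mpr hV0
      exact_mod_cast this
    refine le_trans (MLS.spacing (n := {x // x ∈ Λ} × Fin 2) (MLS.Kad d γ Λ) (MLS.Kad_symm d γ Λ) ?_ ε hε0 hε1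
      (by rw [← hcard]; exact hVl.le) _ ?_) (ENNReal.ofReal_le_ofReal (le_mul_of_one_le_left hε0.le hV1))
    · intro x y
      unfold MLS.Kad
      split_ifs
      · rw [abs_of_pos hγ]; exact hγ1
      · simp
    · rintro u ⟨α, β, hαβ, hlt⟩
      refine ⟨(hherm u).eigenvectorBasis.map (MLS.Ji _), (hherm u).eigenvalues, α, β, ?_, hαβ, ?_⟩
      · intro i
        rw [OrthonormalBasis.map_apply, MLS.Ham_rot, (hherm u).mulVec_eigenvectorBasis, ← map_smul]
        rfl
      · rw [hεk]; exact hlt.le
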